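/- arXiv:1808.04817 — 4 statements merged into one kernel-verified Lean document; each statement's English description precedes it below -/
import Mathlib

section
/- Let f : 𝕋 → 𝕋 be a sense-preserving circle homeomorphism. Then the Fourier support {n ∈ ℤ : f̂(n) ≠ 0} is bounded from below if and only if there exist an integer n ≥ 0 and a finite Blaschke product B of degree n + 1 such that f(ζ) = B(ζ)/ζⁿ for all ζ ∈ 𝕋. -/
/-!
If `f = B / ζⁿ`, then for `j < -n` the coefficient `f̂(j)` is a multiple of `∮ B(ζ) ζᵖ dζ` with
`p = -n - j - 1 ≥ 0`, which vanishes by Cauchy's theorem (`fCoeff_blaschke_eq_zero`).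

Conversely, suppose that `f̂(j) = 0` for all `j < -N`, where `N ≥ 0`. The continuous function
`g = ζᴺ f` has no Fourier coefficients of negative index, so its Fejér means are analytic
polynomials in `ζ`. They converge to `g` uniformly on the circle (`tendsto_fejerMean`), hence by the
maximum modulus principle uniformly on the closed disc, to a function `G` continuous there,
holomorphic inside, and equal to `g` on the circle (`exists_diffContOnCl_extension`).

Such a `G`, being unimodular on the circle, is a finite Blaschke product
(`IsDiscInner.exists_blaschke`). A zero can be divided out by a Blaschke factor, and when no zero is
left, the maximum modulus principle for `G` and `1 / G` makes `G` constant. The process stops: the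
zeros of `G` lie in a disc `|z| ≤ ρ < 1`, so at a fixed point `w` of the disc with `G(w) ≠ 0` all
the factors have modulus at most some `c < 1`, while `|G(w)|` divided by their product stays at
most `1`.

Finally, the degree `m` of the product is found by comparing lifts. Each Blaschke factor gains `2π` in
argument around the circle, while `ζᴺ f` gains `2π (N + 1)` because `f` has degree one. So
`m = N + 1` (`degree_eq`).
-/

open Complex MeasureTheory intervalIntegral ComplexConjugate

noncomputable def fCoeff (f : ℂ → ℂ) (n : ℤ) : ℂ :=
  (1 / (2 * Real.pi) : ℂ) * ∫ θ in (0:ℝ)..(2 * Real.pi),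
    f (Complex.exp (θ * Complex.I)) * Complex.exp (-(n : ℂ) * θ * Complex.I)

/-- A sense-preserving homeomorphism of the unit circle, described via a continuous
strictly increasing degree-one lift. -/
def CirclePosHomeo (f : ℂ → ℂ) : Prop :=
  ∃ F : ℝ → ℝ, Continuous F ∧ StrictMono F ∧
    (∀ θ, F (θ + 2 * Real.pi) = F θ + 2 * Real.pi) ∧
    ∀ θ : ℝ, f (Complex.exp (θ * Complex.I)) = Complex.exp (F θ * Complex.I)

/-! ### Fejér means on the circle -/

local instance instFactTwoPi : Fact (0 < 2 * Real.pi) := ⟨Real.two_pi_pos⟩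

/-- The `n`-th Fejér mean of `φ`, written as `n⁻¹ ∑_{0 ≤ j, k < n} φ̂(j - k) e_{j - k}`, so that its
convolution kernel is visibly `n⁻¹ |∑_{0 ≤ j < n} e_j|² ≥ 0`. It is `0` for `n = 0`. -/
noncomputable def fejerMean (φ : C(AddCircle (2 * Real.pi), ℂ)) (n : ℕ) :
    C(AddCircle (2 * Real.pi), ℂ) :=
  (n : ℂ)⁻¹ • ∑ j ∈ Finset.Ico (0 : ℤ) n, ∑ k ∈ Finset.Ico (0 : ℤ) n,
    fourierCoeff φ (j - k) • fourier (j - k)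

lemma fejerMean_add (φ ψ : C(AddCircle (2 * Real.pi), ℂ)) (n : ℕ) :
    fejerMean (φ + ψ) n = fejerMean φ n + fejerMean ψ n := by
  have hi : ∀ χ : C(AddCircle (2 * Real.pi), ℂ), Integrable χ AddCircle.haarAddCircle :=
    fun χ => χ.continuous.integrable_of_hasCompactSupport (HasCompactSupport.of_compactSpace _)
  have h : fourierCoeff ⇑(φ + ψ) = fourierCoeff φ + fourierCoeff ψ :=
    fourierCoeff.add (hi φ) (hi ψ)
  simp only [fejerMean, h, Pi.add_apply, add_smul, Finset.sum_add_distrib, smul_add]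

lemma fejerMean_smul (c : ℂ) (φ : C(AddCircle (2 * Real.pi), ℂ)) (n : ℕ) :
    fejerMean (c • φ) n = c • fejerMean φ n := by
  have h : ∀ i, fourierCoeff ⇑(c • φ) i = c • fourierCoeff φ i :=
    fun i => fourierCoeff.const_smul φ c i
  simp only [fejerMean, h, smul_assoc, Finset.smul_sum]
  simp only [smul_comm c]

lemma fejerMean_sub (φ ψ : C(AddCircle (2 * Real.pi), ℂ)) (n : ℕ) :
    fejerMean (φ - ψ) n = fejerMean φ n - fejerMean ψ n := by
  have : φ - ψ = φ + (-1 : ℂ) • ψ := by simp [sub_eq_add_neg]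
  rw [this, fejerMean_add, fejerMean_smul]; simp [sub_eq_add_neg]

/-- There are `n - |m|` pairs `0 ≤ j, k < n` with `j - k = m`. -/
lemma fejerMean_fourier (m : ℤ) (n : ℕ) (h : |m| ≤ n) :
    fejerMean (fourier m) n = ((n : ℂ)⁻¹ * ((n : ℂ) - (|m| : ℤ))) • fourier m := by
  have h1 : ∀ j ∈ Finset.Ico (0 : ℤ) n, ∑ k ∈ Finset.Ico (0 : ℤ) n,
      fourierCoeff (fourier (T := 2 * Real.pi) m) (j - k) • fourier (T := 2 * Real.pi) (j - k)
      = if j ∈ Finset.Ico (max 0 m) (min (n : ℤ) (n + m)) then fourier m else 0 := by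
    intro j hj
    have h2 : ∀ k ∈ Finset.Ico (0 : ℤ) n,
        fourierCoeff (fourier (T := 2 * Real.pi) m) (j - k) • fourier (T := 2 * Real.pi) (j - k)
        = if j - m = k then fourier m else 0 := by
      intro k _
      rw [fourierCoeff_fourier, Pi.single_apply]
      by_cases hk : j - m = k
      · have : j - k = m := by omega
        simp [hk, this]
      · have : ¬ j - k = m := by omega
        simp [hk, this]
    rw [Finset.sum_congr rfl h2, Finset.sum_ite_eq]
    refine if_congr ?_ rfl rfl
    simp only [Finset.mem_Ico] at hj ⊢
    omega
  have hsub : Finset.Ico (0 : ℤ) n ∩ Finset.Ico (max 0 m) (min (n : ℤ) (n + m)) =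
      Finset.Ico (max 0 m) (min (n : ℤ) (n + m)) := by
    ext j; simp only [Finset.mem_inter, Finset.mem_Ico]; omega
  have hcard : ((Finset.Ico (max 0 m) (min (n : ℤ) (n + m))).card : ℤ) = n - |m| := by
    rw [Int.card_Ico]
    rcases abs_cases m with ⟨h1, h2⟩ | ⟨h1, h2⟩ <;> omega
  have hcard' : ((Finset.Ico (max 0 m) (min (n : ℤ) (n + m))).card : ℂ) = n - (|m| : ℤ) := by
    exact_mod_cast congrArg (Int.cast : ℤ → ℂ) hcard
  rw [fejerMean, Finset.sum_congr rfl h1, Finset.sum_ite_mem, hsub, Finset.sum_const, mul_smul,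
    ← hcard', Nat.cast_smul_eq_nsmul]

/-- The Fejér mean is an integral against the nonnegative Fejér kernel. -/
lemma fejerMean_apply (φ : C(AddCircle (2 * Real.pi), ℂ)) (n : ℕ) (x : AddCircle (2 * Real.pi)) :
    fejerMean φ n x = ∫ t, (((n : ℝ)⁻¹ *
      normSq (∑ j ∈ Finset.Ico (0 : ℤ) n, fourier j x * fourier (-j) t) : ℝ) : ℂ) * φ t
        ∂AddCircle.haarAddCircle := by
  have hi : ∀ χ : C(AddCircle (2 * Real.pi), ℂ), Integrable χ AddCircle.haarAddCircle :=
    fun χ => χ.continuous.integrable_of_hasCompactSupport (HasCompactSupport.of_compactSpace _)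
  have h1 : ∀ t, (((n : ℝ)⁻¹ *
      normSq (∑ j ∈ Finset.Ico (0 : ℤ) n, fourier j x * fourier (-j) t) : ℝ) : ℂ) * φ t =
      (n : ℂ)⁻¹ * ∑ j ∈ Finset.Ico (0 : ℤ) n, ∑ k ∈ Finset.Ico (0 : ℤ) n,
        (fourier (j - k) x * (fourier (-(j - k)) t * φ t)) := by
    intro t
    rw [ofReal_mul, ← mul_conj, map_sum, Finset.sum_mul_sum, mul_assoc, Finset.sum_mul]
    simp only [Finset.sum_mul, map_mul, ← fourier_neg, ofReal_inv, ofReal_natCast]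
    congr 1
    refine Finset.sum_congr rfl fun j _ => Finset.sum_congr rfl fun k _ => ?_
    rw [sub_eq_add_neg, neg_add, fourier_add, fourier_add]
    ring
  simp only [h1]
  have h2 : ∀ j k : ℤ, Integrable (fun t => fourier (j - k) x * (fourier (-(j - k)) t * φ t))
      AddCircle.haarAddCircle := fun j k => by
    have h3 : Continuous fun t => fourier (-(j - k)) t * φ t :=
      (map_continuous _).mul (map_continuous _)
    exact (hi ⟨_, h3⟩).const_mul _
  rw [MeasureTheory.integral_const_mul, MeasureTheory.integral_finsetSum _
    (fun j _ => integrable_finsetSum _ fun k _ => h2 j k)]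
  simp only [fejerMean, ContinuousMap.smul_apply, ContinuousMap.sum_apply, smul_eq_mul]
  congr 1
  refine Finset.sum_congr rfl fun j _ => ?_
  rw [MeasureTheory.integral_finsetSum _ (fun k _ => h2 j k)]
  refine Finset.sum_congr rfl fun k _ => ?_
  rw [MeasureTheory.integral_const_mul, fourierCoeff, mul_comm]
  rfl

lemma norm_fejerMean_le (φ : C(AddCircle (2 * Real.pi), ℂ)) {n : ℕ} (hn : 0 < n) :
    ‖fejerMean φ n‖ ≤ ‖φ‖ := by
  refine (ContinuousMap.norm_le _ (norm_nonneg _)).2 fun x => ?_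
  set K : AddCircle (2 * Real.pi) → ℝ := fun t => (n : ℝ)⁻¹ *
      normSq (∑ j ∈ Finset.Ico (0 : ℤ) n, fourier j x * fourier (-j) t) with hK
  have hK0 : ∀ t, 0 ≤ K t := fun t => mul_nonneg (by positivity) (normSq_nonneg _)
  have hKc : Continuous K := by
    refine continuous_const.mul (continuous_normSq.comp ?_)
    exact continuous_finsetSum _ fun j _ => continuous_const.mul (map_continuous _)
  have hKi : Integrable K AddCircle.haarAddCircle :=
    hKc.integrable_of_hasCompactSupport (HasCompactSupport.of_compactSpace _)
  -- the Fejér kernel has mean one, as the mean of the constant function `1` is `1`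
  have hK1 : ∫ t, K t ∂AddCircle.haarAddCircle = 1 := by
    have h0 := fejerMean_apply (fourier 0) n x
    rw [fejerMean_fourier 0 n (by simp)] at h0
    have hn' : (n : ℂ) ≠ 0 := by exact_mod_cast hn.ne'
    simp only [ContinuousMap.smul_apply, fourier_zero, abs_zero, Int.cast_zero, sub_zero,
      inv_mul_cancel₀ hn', mul_one, smul_eq_mul] at h0
    exact ofReal_injective ((_root_.integral_ofReal (f := K)).symm.trans h0.symm)
  rw [fejerMean_apply]
  calc _ ≤ ∫ t, K t * ‖φ‖ ∂AddCircle.haarAddCircle := by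
        refine norm_integral_le_of_norm_le (hKi.mul_const _) (Filter.Eventually.of_forall fun t => ?_)
        rw [norm_mul, norm_real, Real.norm_of_nonneg (hK0 t)]
        exact mul_le_mul_of_nonneg_left (φ.norm_coe_le_norm t) (hK0 t)
    _ = ‖φ‖ := by rw [MeasureTheory.integral_mul_const, hK1, one_mul]

open Filter Topology in
/-- Fejér's theorem. It holds for trigonometric polynomials by `fejerMean_fourier`; these are dense in
the continuous functions, and taking Fejér means is contractive for the supremum norm. -/
theorem tendsto_fejerMean (φ : C(AddCircle (2 * Real.pi), ℂ)) :
    Tendsto (fejerMean φ) atTop (𝓝 φ) := by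
  have hspan : ∀ q ∈ Submodule.span ℂ (Set.range <| @fourier (2 * Real.pi)),
      Tendsto (fejerMean q) atTop (𝓝 q) := by
    intro q hq
    induction hq using Submodule.span_induction with
    | mem q hq =>
      obtain ⟨m, rfl⟩ := hq
      have h1 : Tendsto (fun n : ℕ => (n : ℂ)⁻¹ * ((n : ℂ) - (|m| : ℤ))) atTop (𝓝 1) := by
        have h2 : Tendsto (fun n : ℕ => 1 - (n : ℂ)⁻¹ * (|m| : ℤ)) atTop (𝓝 (1 - 0 * (|m| : ℤ))) :=
          tendsto_const_nhds.sub (tendsto_inv_atTop_nhds_zero_nat.mul_const _)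
        rw [zero_mul, sub_zero] at h2
        refine h2.congr' ?_
        filter_upwards [eventually_gt_atTop 0] with n hn
        have hn' : (n : ℂ) ≠ 0 := by exact_mod_cast hn.ne'
        rw [mul_sub, inv_mul_cancel₀ hn']
      have h3 := h1.smul_const (fourier (T := 2 * Real.pi) m)
      rw [one_smul] at h3
      refine h3.congr' ?_
      filter_upwards [eventually_ge_atTop |m|.toNat] with n hn
      rw [fejerMean_fourier m n (by omega)]
    | zero =>
      have : ∀ n, fejerMean 0 n = 0 := fun n => by
        simpa using fejerMean_smul 0 0 n
      simp only [funext this, tendsto_const_nhds_iff]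
    | add p q _ _ hp hq =>
      simp only [funext (fejerMean_add p q)]
      exact hp.add hq
    | smul c q _ hq =>
      simp only [funext (fejerMean_smul c q)]
      exact hq.const_smul c
  rw [Metric.tendsto_atTop]
  intro ε hε
  have hmem : φ ∈ (Submodule.span ℂ (Set.range <| @fourier (2 * Real.pi))).topologicalClosure := by
    rw [span_fourier_closure_eq_top]; trivial
  obtain ⟨q, hq, hqφ⟩ := Metric.mem_closure_iff.1 hmem (ε / 3) (by positivity)
  obtain ⟨N, hN⟩ := Metric.tendsto_atTop.1 (hspan q hq) (ε / 3) (by positivity)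
  refine ⟨N + 1, fun n hn => ?_⟩
  have h1 : dist (fejerMean φ n) (fejerMean q n) < ε / 3 := by
    rw [dist_eq_norm, ← fejerMean_sub]
    exact (norm_fejerMean_le _ (by omega)).trans_lt (by rwa [← dist_eq_norm])
  have h2 := hN n (by omega)
  rw [dist_comm] at hqφ
  linarith [dist_triangle4 (fejerMean φ n) (fejerMean q n) q φ]

/-! ### Extension to the disc -/

lemma fourier_two_pi_apply (m : ℤ) (θ : ℝ) :
    fourier m (θ : AddCircle (2 * Real.pi)) = exp (θ * I) ^ m := by
  rw [fourier_coe_apply, ← exp_int_mul]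
  congr 1
  have : (Real.pi : ℂ) ≠ 0 := ofReal_ne_zero.2 Real.pi_ne_zero
  push_cast
  field_simp

lemma exists_exp_of_norm_one {z : ℂ} (hz : ‖z‖ = 1) : ∃ θ : ℝ, z = exp (θ * I) :=
  ⟨arg z, by simpa [hz] using (norm_mul_exp_arg_mul_I z).symm⟩

open Filter Topology Metric in
/-- A continuous function on the circle without Fourier coefficients of negative index is the boundary
function of an element of the disc algebra: its Fejér means are polynomials in `z`, and uniform
convergence on the circle forces uniform convergence on the closed disc. -/
theorem exists_diffContOnCl_extension (φ : C(AddCircle (2 * Real.pi), ℂ))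
    (h : ∀ m < 0, fourierCoeff φ m = 0) :
    ∃ G : ℂ → ℂ, DiffContOnCl ℂ G (ball 0 1) ∧ ∀ θ : ℝ, G (exp (θ * I)) = φ θ := by
  -- `toNat` is harmless: the terms with `j - k < 0` have a vanishing coefficient
  set p : ℕ → ℂ → ℂ := fun n z => (n : ℂ)⁻¹ * ∑ j ∈ Finset.Ico (0 : ℤ) n,
    ∑ k ∈ Finset.Ico (0 : ℤ) n, fourierCoeff φ (j - k) * z ^ (j - k).toNat with hp
  have hpd : ∀ n, Differentiable ℂ (p n) := fun n => by
    simp only [hp]; fun_prop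
  have hpe : ∀ n (θ : ℝ), p n (exp (θ * I)) = fejerMean φ n θ := by
    intro n θ
    simp only [hp, fejerMean, ContinuousMap.smul_apply, ContinuousMap.sum_apply, smul_eq_mul]
    congr 1
    refine Finset.sum_congr rfl fun j _ => Finset.sum_congr rfl fun k _ => ?_
    rcases lt_or_ge (j - k) 0 with hjk | hjk
    · rw [h _ hjk, zero_mul, zero_mul]
    · rw [fourier_two_pi_apply, ← zpow_natCast, Int.toNat_of_nonneg hjk]
  have hbound : ∀ m n, ∀ z ∈ closedBall (0 : ℂ) 1,
      dist (p m z) (p n z) ≤ dist (fejerMean φ m) (fejerMean φ n) := by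
    intro m n z hz
    have hd : DiffContOnCl ℂ (fun z => p m z - p n z) (ball 0 1) :=
      ((hpd m).sub (hpd n)).diffContOnCl
    rw [dist_eq_norm]
    refine norm_le_of_forall_mem_frontier_norm_le isBounded_ball hd (fun w hw => ?_)
      (by rwa [closure_ball _ one_ne_zero])
    rw [frontier_ball _ one_ne_zero, mem_sphere_zero_iff_norm] at hw
    obtain ⟨θ, rfl⟩ := exists_exp_of_norm_one hw
    rw [hpe, hpe, ← dist_eq_norm]
    exact ContinuousMap.dist_apply_le_dist _
  have hC : UniformCauchySeqOn p atTop (closedBall 0 1) := by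
    rw [Metric.uniformCauchySeqOn_iff]
    intro ε hε
    obtain ⟨N, hN⟩ := Metric.cauchySeq_iff.1 (tendsto_fejerMean φ).cauchySeq ε hε
    exact ⟨N, fun m hm n hn z hz => (hbound m n z hz).trans_lt (hN m hm n hn)⟩
  have hlim : ∀ z ∈ closedBall (0 : ℂ) 1, Tendsto (fun n => p n z) atTop
      (𝓝 (limUnder atTop fun n => p n z)) :=
    fun z hz => (hC.cauchySeq hz).tendsto_limUnder
  have hT := hC.tendstoUniformlyOn_of_tendsto hlim
  refine ⟨fun z => limUnder atTop fun n => p n z, ⟨?_, ?_⟩, fun θ => ?_⟩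
  · exact (hT.mono ball_subset_closedBall).tendstoLocallyUniformlyOn.differentiableOn
      (Eventually.of_forall fun n => (hpd n).differentiableOn) isOpen_ball
  · rw [closure_ball _ one_ne_zero]
    exact hT.continuousOn (Frequently.of_forall fun n => (hpd n).continuous.continuousOn)
  · refine tendsto_nhds_unique (hlim _ (by simp [norm_exp_ofReal_mul_I])) ?_
    simp only [hpe]
    exact ((continuous_eval_const (θ : AddCircle (2 * Real.pi))).tendsto φ).comp
      (tendsto_fejerMean φ)

/-! ### Blaschke factors and inner functions of the disc algebra -/

lemma one_sub_conj_mul_ne_zero {a z : ℂ} (ha : ‖a‖ < 1) (hz : ‖z‖ ≤ 1) :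
    1 - conj a * z ≠ 0 := by
  intro h
  have h1 : ‖conj a * z‖ = 1 := by rw [← sub_eq_zero.1 h, norm_one]
  rw [norm_mul, RCLike.norm_conj] at h1
  nlinarith [norm_nonneg a, norm_nonneg z]

lemma blaschke_identity (a z : ℂ) :
    ‖1 - conj a * z‖ ^ 2 - ‖z - a‖ ^ 2 = (1 - ‖a‖ ^ 2) * (1 - ‖z‖ ^ 2) := by
  simp only [← normSq_eq_norm_sq, normSq_apply]
  simp
  ring

lemma norm_blaschke_eq_one {a z : ℂ} (ha : ‖a‖ < 1) (hz : ‖z‖ = 1) :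
    ‖(z - a) / (1 - conj a * z)‖ = 1 := by
  have h := blaschke_identity a z
  have h0 := norm_ne_zero_iff.2 (one_sub_conj_mul_ne_zero ha hz.le)
  rw [hz, one_pow, sub_self, mul_zero, sub_eq_zero] at h
  rw [norm_div, div_eq_one_iff_eq h0]
  exact ((pow_left_inj₀ (norm_nonneg _) (norm_nonneg _) two_ne_zero).1 h).symm

/-- At a fixed point `w` of the disc, the Blaschke factors with zero in `|a| ≤ ρ < 1` are bounded away
from `1` in modulus, because `blaschke_identity` bounds `1 - |b_a(w)|²` below by
`(1 - ρ²)(1 - |w|²) / 4`. -/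
lemma exists_norm_blaschke_le {ρ : ℝ} (hρ : ρ < 1) {w : ℂ} (hw : ‖w‖ < 1) :
    ∃ c : ℝ, 0 < c ∧ c < 1 ∧ ∀ a : ℂ, ‖a‖ ≤ ρ → ‖(w - a) / (1 - conj a * w)‖ ≤ c := by
  rcases lt_or_ge ρ 0 with h0 | h0
  · exact ⟨1 / 2, by norm_num, by norm_num, fun a ha => by linarith [norm_nonneg a]⟩
  set d : ℝ := (1 - ρ ^ 2) * (1 - ‖w‖ ^ 2) / 4 with hd
  have hρ2 : 0 < 1 - ρ ^ 2 := by nlinarith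
  have hw2 : 0 < 1 - ‖w‖ ^ 2 := by nlinarith [norm_nonneg w]
  have hd0 : 0 < d := by positivity
  have hd1 : d < 1 := by
    have : (1 - ρ ^ 2) * (1 - ‖w‖ ^ 2) ≤ 1 * 1 :=
      mul_le_mul (by nlinarith) (by nlinarith [norm_nonneg w]) hw2.le zero_le_one
    rw [hd]; linarith
  refine ⟨√(1 - d), Real.sqrt_pos.2 (by linarith), ?_, fun a ha => ?_⟩
  · rw [Real.sqrt_lt' one_pos]; linarith
  · apply Real.le_sqrt_of_sq_le
    have ha1 : ‖a‖ < 1 := ha.trans_lt hρ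
    have hne := norm_pos_iff.2 (one_sub_conj_mul_ne_zero ha1 hw.le)
    have hle : ‖1 - conj a * w‖ ≤ 2 := by
      refine (norm_sub_le _ _).trans ?_
      rw [norm_one, norm_mul, RCLike.norm_conj]
      nlinarith [norm_nonneg a, norm_nonneg w]
    have h1 : (1 - ρ ^ 2) * (1 - ‖w‖ ^ 2) ≤ (1 - ‖a‖ ^ 2) * (1 - ‖w‖ ^ 2) := by
      apply mul_le_mul_of_nonneg_right _ hw2.le
      nlinarith [norm_nonneg a]
    rw [norm_div, div_pow, div_le_iff₀ (by positivity)]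
    have h2 : d * ‖1 - conj a * w‖ ^ 2 ≤ d * 4 :=
      mul_le_mul_of_nonneg_left (by nlinarith) hd0.le
    nlinarith [blaschke_identity a w]

open Metric

/-- The inner functions of the disc algebra: continuous on the closed unit disc, holomorphic in its
interior, and unimodular on the unit circle. -/
structure IsDiscInner (G : ℂ → ℂ) : Prop where
  diffContOnCl : DiffContOnCl ℂ G (ball 0 1)
  norm_eq_one : ∀ z : ℂ, ‖z‖ = 1 → ‖G z‖ = 1

/-- The maximum modulus principle on the unit disc. -/
lemma norm_le_one_of_diffContOnCl {G : ℂ → ℂ} (hd : DiffContOnCl ℂ G (ball 0 1))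
    (h1 : ∀ z : ℂ, ‖z‖ = 1 → ‖G z‖ = 1) {z : ℂ} (hz : ‖z‖ ≤ 1) : ‖G z‖ ≤ 1 := by
  refine norm_le_of_forall_mem_frontier_norm_le isBounded_ball hd (fun w hw => ?_)
    (by rw [closure_ball _ one_ne_zero]; simpa using hz)
  rw [frontier_ball _ one_ne_zero, mem_sphere_zero_iff_norm] at hw
  exact (h1 w hw).le

/-- A zero `a` in the disc can be divided out by its Blaschke factor. The quotient is
`(1 - ā z) (G z - G a) / (z - a)`, with the removable singularity at `a` filled in by `dslope`. -/
lemma IsDiscInner.exists_div {G : ℂ → ℂ} (hG : IsDiscInner G) {a : ℂ} (ha : ‖a‖ < 1)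
    (h0 : G a = 0) :
    ∃ H, IsDiscInner H ∧ ∀ z, ‖z‖ ≤ 1 → G z = (z - a) / (1 - conj a * z) * H z := by
  have key : ∀ z, ‖z‖ ≤ 1 →
      G z = (z - a) / (1 - conj a * z) * (dslope G a z * (1 - conj a * z)) := by
    intro z hz
    have hne := one_sub_conj_mul_ne_zero ha hz
    have := sub_smul_dslope G a z
    rw [h0, sub_zero, smul_eq_mul] at this
    rw [← this, div_mul_eq_mul_div, eq_div_iff hne]
    ring
  refine ⟨fun z => dslope G a z * (1 - conj a * z), ⟨⟨?_, ?_⟩, fun z hz => ?_⟩, key⟩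
  · have hn : ball (0 : ℂ) 1 ∈ nhds a := isOpen_ball.mem_nhds (by simpa using ha)
    exact ((differentiableOn_dslope hn).2 hG.1.1).mul (by fun_prop)
  · have hc := hG.1.2
    rw [closure_ball _ one_ne_zero] at hc ⊢
    have hn : closedBall (0 : ℂ) 1 ∈ nhds a := closedBall_mem_nhds_of_mem (by simpa using ha)
    have hda : DifferentiableAt ℂ G a :=
      hG.1.differentiableAt isOpen_ball (by simpa using ha)
    exact ((continuousOn_dslope hn).2 ⟨hc, hda⟩).mul (by fun_prop)
  · have h := congrArg norm (key z hz.le)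
    rw [norm_mul, norm_blaschke_eq_one ha hz, one_mul, hG.2 z hz] at h
    exact h.symm

/-- Without zeros, both `G` and `1 / G` are bounded by `1`, so `|G|` is constant and hence `G` is. -/
lemma IsDiscInner.exists_const {G : ℂ → ℂ} (hG : IsDiscInner G)
    (h0 : ∀ z, ‖z‖ < 1 → G z ≠ 0) : ∃ σ : ℂ, ‖σ‖ = 1 ∧ ∀ z, ‖z‖ ≤ 1 → G z = σ := by
  have hne : ∀ z ∈ closure (ball (0 : ℂ) 1), G z ≠ 0 := by
    intro z hz
    rw [closure_ball _ one_ne_zero, mem_closedBall_zero_iff] at hz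
    rcases hz.lt_or_eq with h | h
    · exact h0 z h
    · intro hz0
      have := hG.2 z h
      rw [hz0, norm_zero] at this
      exact zero_ne_one this
  have hinv : DiffContOnCl ℂ G⁻¹ (ball 0 1) := hG.1.inv hne
  have hnorm : ∀ z : ℂ, ‖z‖ ≤ 1 → ‖G z‖ = 1 := by
    intro z hz
    refine le_antisymm (norm_le_one_of_diffContOnCl hG.1 hG.2 hz) ?_
    have h1 := norm_le_one_of_diffContOnCl hinv (fun w hw => by simp [hG.2 w hw]) hz
    rw [Pi.inv_apply, norm_inv] at h1
    have hp : 0 < ‖G z‖ :=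
      norm_pos_iff.2 (hne z (by rw [closure_ball _ one_ne_zero]; simpa using hz))
    exact (inv_le_one₀ hp).1 h1
  refine ⟨G 0, hnorm 0 (by simp), fun z hz => ?_⟩
  refine eqOn_closedBall_of_isMaxOn_norm hG.1 (fun w hw => ?_) (by simpa using hz)
  change ‖G w‖ ≤ ‖G 0‖
  rw [hnorm w (by simpa using (mem_ball_zero_iff.1 hw).le), hnorm 0 (by simp)]

/-- If every Blaschke factor with zero in `|a| ≤ ρ` has modulus at most `c` at `w`, and `|G w| > cᵏ`,
then fewer than `k` zeros can be divided out of `G`, since the quotient is again bounded by `1`. This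
is what makes the induction on `k` terminate. -/
lemma exists_blaschke_of_pow_lt {ρ c : ℝ} {w : ℂ} (hw : ‖w‖ < 1) (hc : 0 < c)
    (hb : ∀ a : ℂ, ‖a‖ ≤ ρ → ‖(w - a) / (1 - conj a * w)‖ ≤ c) (k : ℕ) :
    ∀ G : ℂ → ℂ, IsDiscInner G → (∀ a, ‖a‖ < 1 → G a = 0 → ‖a‖ ≤ ρ) → c ^ k < ‖G w‖ →
    ∃ (m : ℕ) (σ : ℂ) (z : Fin m → ℂ), ‖σ‖ = 1 ∧ (∀ k, ‖z k‖ < 1) ∧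
      ∀ ζ : ℂ, ‖ζ‖ = 1 → G ζ = σ * ∏ k, (ζ - z k) / (1 - conj (z k) * ζ) := by
  induction k with
  | zero =>
    intro G hG _ hlt
    rw [pow_zero] at hlt
    exact absurd (norm_le_one_of_diffContOnCl hG.1 hG.2 hw.le) hlt.not_ge
  | succ k ih =>
    intro G hG hz hlt
    by_cases h0 : ∀ z, ‖z‖ < 1 → G z ≠ 0
    · obtain ⟨σ, hσ, h⟩ := hG.exists_const h0
      exact ⟨0, σ, Fin.elim0, hσ, fun k => k.elim0, fun ζ hζ => by simp [h ζ hζ.le]⟩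
    · push Not at h0
      obtain ⟨a, ha, hGa⟩ := h0
      obtain ⟨H, hH, hGH⟩ := hG.exists_div ha hGa
      have hlt' : c ^ k < ‖H w‖ := by
        rw [hGH w hw.le, norm_mul, pow_succ'] at hlt
        have := mul_le_mul_of_nonneg_right (hb a (hz a ha hGa)) (norm_nonneg (H w))
        exact lt_of_mul_lt_mul_left (hlt.trans_le this) hc.le
      obtain ⟨m, σ, z, hσ, hz1, hB⟩ := ih H hH
        (fun b hb h => hz b hb (by rw [hGH b hb.le, h, mul_zero])) hlt'
      refine ⟨m + 1, σ, Fin.cons a z, hσ, fun k => ?_, fun ζ hζ => ?_⟩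
      · refine Fin.cases ?_ (fun i => ?_) k
        · simpa using ha
        · simpa using hz1 i
      · rw [hGH ζ hζ.le, hB ζ hζ, Fin.prod_univ_succ]
        simp only [Fin.cons_zero, Fin.cons_succ]
        ring

theorem IsDiscInner.exists_blaschke {G : ℂ → ℂ} (hG : IsDiscInner G) :
    ∃ (m : ℕ) (σ : ℂ) (z : Fin m → ℂ), ‖σ‖ = 1 ∧ (∀ k, ‖z k‖ < 1) ∧
      ∀ ζ : ℂ, ‖ζ‖ = 1 → G ζ = σ * ∏ k, (ζ - z k) / (1 - conj (z k) * ζ) := by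
  by_cases h0 : ∀ z, ‖z‖ < 1 → G z ≠ 0
  · obtain ⟨σ, hσ, h⟩ := hG.exists_const h0
    exact ⟨0, σ, Fin.elim0, hσ, fun k => k.elim0, fun ζ hζ => by simp [h ζ hζ.le]⟩
  push Not at h0
  obtain ⟨a, ha, hGa⟩ := h0
  have hc := hG.1.2
  rw [closure_ball _ one_ne_zero] at hc
  have hK : IsCompact (closedBall (0 : ℂ) 1 ∩ G ⁻¹' {0}) :=
    (isCompact_closedBall 0 1).of_isClosed_subset
      (hc.preimage_isClosed_of_isClosed isClosed_closedBall isClosed_singleton)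
      Set.inter_subset_left
  obtain ⟨b, ⟨hb, hGb⟩, hmax⟩ := hK.exists_isMaxOn ⟨a, by simpa using ha.le, hGa⟩
    continuous_norm.continuousOn
  have hmax' : ∀ z, ‖z‖ ≤ 1 → G z = 0 → ‖z‖ ≤ ‖b‖ := fun z hz h => hmax ⟨by simpa using hz, h⟩
  have hb1 : ‖b‖ < 1 := by
    refine lt_of_le_of_ne (by simpa using hb) fun h => ?_
    have := hG.2 b h
    rw [show G b = 0 from hGb, norm_zero] at this
    exact zero_ne_one this
  -- a point of the disc farther from the origin than every zero of `G`
  set w : ℂ := (((‖b‖ + 1) / 2 : ℝ) : ℂ) with hw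
  have hwn : ‖w‖ = (‖b‖ + 1) / 2 := by
    rw [hw, norm_real, Real.norm_of_nonneg (by positivity)]
  have hw1 : ‖w‖ < 1 := by rw [hwn]; linarith
  have hGw : 0 < ‖G w‖ := norm_pos_iff.2 fun h => by
    have := hmax' w hw1.le h
    rw [hwn] at this; linarith
  obtain ⟨c, hc0, hc1, hcb⟩ := exists_norm_blaschke_le hb1 hw1
  obtain ⟨k, hk⟩ := exists_pow_lt_of_lt_one hGw hc1
  exact exists_blaschke_of_pow_lt hw1 hc0 hcb k G hG
    (fun z hz h => hmax' z hz.le h) hk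

/-! ### Winding numbers -/

/-- A continuous degree-one lift of a Blaschke factor. On the circle the factor is `ζ ū / u` with
`u = 1 - ā ζ` of positive real part, so `θ - 2 arg u` is a lift and its second term is periodic. -/
lemma exists_blaschke_lift {a : ℂ} (ha : ‖a‖ < 1) :
    ∃ L : ℝ → ℝ, Continuous L ∧ (∀ θ, L (θ + 2 * Real.pi) = L θ + 2 * Real.pi) ∧
      ∀ θ : ℝ, (exp (θ * I) - a) / (1 - conj a * exp (θ * I)) = exp (L θ * I) := by
  set u : ℝ → ℂ := fun θ => 1 - conj a * exp (θ * I) with hu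
  have hre : ∀ θ, 0 < (u θ).re := by
    intro θ
    have h1 : (conj a * exp (θ * I)).re ≤ ‖a‖ := by
      refine (re_le_norm _).trans ?_
      rw [norm_mul, RCLike.norm_conj, norm_exp_ofReal_mul_I, mul_one]
    simp only [hu, sub_re, one_re]
    linarith
  have hne : ∀ θ, u θ ≠ 0 := fun θ h => by
    have := hre θ; rw [h, zero_re] at this; exact lt_irrefl _ this
  refine ⟨fun θ => θ - 2 * arg (u θ), ?_, fun θ => ?_, fun θ => ?_⟩
  · refine continuous_id.sub (continuous_const.mul ?_)
    have huc : Continuous u := by simp only [hu]; fun_prop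
    exact continuous_iff_continuousAt.2 fun θ =>
      (continuousAt_arg (Or.inl (hre θ))).comp huc.continuousAt
  · have : u (θ + 2 * Real.pi) = u θ := by
      simp only [hu]
      push_cast
      rw [add_mul, exp_periodic]
    simp only [this]
    ring
  · have h1 : exp (θ * I) - a = exp (θ * I) * conj (u θ) := by
      have : conj (exp (θ * I)) = (exp (θ * I))⁻¹ := by
        rw [← exp_conj, ← exp_neg]; simp
      simp only [hu, map_sub, map_one, map_mul, conj_conj, this]
      field_simp [exp_ne_zero]
    have h2 : conj (u θ) / u θ = exp (-(2 * arg (u θ)) * I) := by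
      have h3 := norm_mul_exp_arg_mul_I (u θ)
      have h4 : conj (u θ) = ‖u θ‖ * exp (-(arg (u θ) * I)) := by
        conv_lhs => rw [← h3]
        rw [map_mul, conj_ofReal, ← exp_conj]
        simp
      have hn : (‖u θ‖ : ℂ) ≠ 0 := ofReal_ne_zero.2 (norm_ne_zero_iff.2 (hne θ))
      rw [div_eq_iff (hne θ), h4]
      generalize arg (u θ) = α at h3 ⊢
      rw [← h3, norm_mul, norm_real, norm_norm, norm_exp_ofReal_mul_I, mul_one, mul_left_comm,
        ← exp_add]
      congr 2
      ring
    rw [h1, mul_div_assoc, h2, ← exp_add]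
    congr 1
    push_cast
    ring

/-- A continuous real `D` for which `exp (i D)` is constant is itself constant, since `D` can only vary
by integer multiples of `2π`. -/
lemma lift_eq_of_exp_const {D : ℝ → ℝ} (hD : Continuous D) {κ : ℂ} (hexp : ∀ θ : ℝ, exp (D θ * I) = κ)
    (x y : ℝ) : D x = D y := by
  have hmem : ∀ t, ∃ k : ℤ, (D t - D y) / (2 * Real.pi) = k := by
    intro t
    obtain ⟨k, hk⟩ := exp_eq_exp_iff_exists_int.1 ((hexp t).trans (hexp y).symm)
    refine ⟨k, ?_⟩
    rw [div_eq_iff Real.two_pi_pos.ne', sub_eq_iff_eq_add]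
    have h1 : ((D t : ℝ) : ℂ) = (((k : ℝ) * (2 * Real.pi) + D y : ℝ) : ℂ) := by
      apply mul_right_cancel₀ I_ne_zero
      rw [hk]; push_cast; ring
    exact ofReal_injective h1
  choose e he using hmem
  have hec : Continuous e := by
    rw [Int.isClosedEmbedding_coe_real.isEmbedding.continuous_iff]
    exact ((hD.sub continuous_const).div_const _).congr he
  have h := PreconnectedSpace.constant (α := ℝ) inferInstance hec (x := x) (y := y)
  have hx := he x
  rw [h, ← he y, sub_self, zero_div, div_eq_zero_iff] at hx
  rcases hx with hx | hx
  · exact sub_eq_zero.1 hx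
  · exact absurd hx Real.two_pi_pos.ne'

/-- Comparison of the winding numbers of `ζᴺ f` and of a Blaschke product with `m` factors. -/
lemma degree_eq {F : ℝ → ℝ} (hF : Continuous F) (hFp : F (2 * Real.pi) = F 0 + 2 * Real.pi)
    {N m : ℕ} {σ : ℂ} {z : Fin m → ℂ} (hz : ∀ k, ‖z k‖ < 1)
    (h : ∀ θ : ℝ, exp (θ * I) ^ N * exp (F θ * I) =
      σ * ∏ k, (exp (θ * I) - z k) / (1 - conj (z k) * exp (θ * I))) : m = N + 1 := by
  choose L hLc hLp hLe using fun k => exists_blaschke_lift (hz k)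
  have hD : Continuous fun θ => N * θ + F θ - ∑ k, L k θ := by
    have := continuous_finsetSum Finset.univ fun k (_ : k ∈ Finset.univ) => hLc k
    fun_prop
  have key := lift_eq_of_exp_const hD (κ := σ) (fun θ => by
    have h1 := h θ
    simp only [hLe] at h1
    rw [← exp_sum, ← exp_nat_mul, ← exp_add] at h1
    have h2 : exp (((N * θ + F θ - ∑ k, L k θ : ℝ) : ℂ) * I) =
        exp (N * (θ * I) + F θ * I) / exp (∑ k, L k θ * I) := by
      rw [← exp_sub]
      congr 1
      push_cast
      rw [← Finset.sum_mul]
      ring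
    rw [h2, h1, mul_div_assoc, div_self (exp_ne_zero _), mul_one]) (0 + 2 * Real.pi) 0
  have hsum : ∑ k, L k (0 + 2 * Real.pi) = ∑ k, L k 0 + m * (2 * Real.pi) := by
    simp only [hLp, Finset.sum_add_distrib, Finset.sum_const, Finset.card_univ, Fintype.card_fin,
      nsmul_eq_mul]
  simp only [hsum] at key
  rw [zero_add, hFp] at key
  have h2 : (m : ℝ) = N + 1 := by
    apply mul_right_cancel₀ Real.two_pi_pos.ne'
    linarith
  exact_mod_cast h2

/-- Cauchy's theorem, applied to `B(ζ) ζᵖ` with `p = -n - j - 1`. -/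
lemma fCoeff_blaschke_eq_zero {f : ℂ → ℂ} {n m : ℕ} {σ : ℂ} {z : Fin m → ℂ}
    (hz : ∀ k, ‖z k‖ < 1)
    (hf : ∀ ζ : ℂ, ‖ζ‖ = 1 →
      f ζ = (σ * ∏ k, (ζ - z k) / (1 - conj (z k) * ζ)) / ζ ^ n) {j : ℤ} (hj : j < -n) :
    fCoeff f j = 0 := by
  obtain ⟨p, hp⟩ : ∃ p : ℕ, j = -n - p - 1 := ⟨(-n - j - 1).toNat, by omega⟩
  set B : ℂ → ℂ := fun ζ => σ * ∏ k, (ζ - z k) / (1 - conj (z k) * ζ) with hB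
  have hBd : DiffContOnCl ℂ (fun ζ => B ζ * ζ ^ p) (ball 0 1) := by
    apply DifferentiableOn.diffContOnCl
    rw [closure_ball _ one_ne_zero]
    refine DifferentiableOn.mul (DifferentiableOn.const_mul ?_ _) (by fun_prop)
    refine DifferentiableOn.fun_finsetProd fun k _ => ?_
    exact DifferentiableOn.div (by fun_prop) (by fun_prop)
      fun ζ hζ => one_sub_conj_mul_ne_zero (hz k) (by simpa using hζ)
  have h0 := hBd.circleIntegral_eq_zero zero_le_one
  rw [circleIntegral] at h0
  -- on the circle, `dζ = iζ dθ` turns `f(ζ) ζ⁻ʲ dθ` into `-i B(ζ) ζᵖ dζ`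
  have hint : ∀ θ : ℝ, f (exp (θ * I)) * exp (-(j : ℂ) * θ * I) =
      -I * (deriv (circleMap 0 1) θ • (B (circleMap 0 1 θ) * circleMap 0 1 θ ^ p)) := by
    intro θ
    rw [hf _ (norm_exp_ofReal_mul_I θ), deriv_circleMap]
    change B _ / _ * _ = _
    simp only [circleMap, ofReal_one, one_mul, zero_add, smul_eq_mul]
    have h1 : exp (-(j : ℂ) * θ * I) =
        exp (θ * I) ^ n * (exp (θ * I) ^ p * exp (θ * I)) := by
      rw [← exp_nat_mul, ← exp_nat_mul, ← exp_add, ← exp_add, hp]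
      congr 1
      push_cast
      ring
    have h2 : exp (θ * I) ^ n ≠ 0 := pow_ne_zero _ (exp_ne_zero _)
    rw [h1, ← mul_assoc, div_mul_cancel₀ _ h2]
    linear_combination ((B (exp (θ * I)) * exp (θ * I) ^ p * exp (θ * I))) * I_sq
  rw [fCoeff]
  simp only [hint]
  rw [intervalIntegral.integral_const_mul, h0, mul_zero, mul_zero]

/-! ### The characterization -/

/-- the Fourier support of a circle homeomorphism is bounded below iff
`f(ζ) = B(ζ)/ζⁿ` for some `n ≥ 0` and a Blaschke product `B` of degree `n + 1`. -/
theorem circle_homeo_support_bddBelow_iff_blaschke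
    (f : ℂ → ℂ) (hf : CirclePosHomeo f) :
    BddBelow {n : ℤ | fCoeff f n ≠ 0} ↔
      ∃ (n : ℕ) (σ : ℂ) (z : Fin (n + 1) → ℂ), ‖σ‖ = 1 ∧ (∀ k, ‖z k‖ < 1) ∧
        ∀ ζ : ℂ, ‖ζ‖ = 1 →
          f ζ = (σ * ∏ k, (ζ - z k) / (1 - conj (z k) * ζ)) / ζ ^ n := by
  constructor
  · rintro ⟨b, hb⟩
    obtain ⟨F, hFc, -, hFp, hFe⟩ := hf
    set N : ℕ := (-b).toNat with hN
    have hvan : ∀ m < 0, fCoeff f (m - N) = 0 := by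
      intro m hm
      by_contra hne
      have := hb (show m - (N : ℤ) ∈ _ from hne)
      omega
    have hper : Function.Periodic (fun θ : ℝ => exp (θ * I) ^ N * exp (F θ * I))
        (2 * Real.pi) := by
      intro θ
      simp only [hFp]
      push_cast
      rw [add_mul, add_mul, exp_periodic, exp_periodic]
    set φ : C(AddCircle (2 * Real.pi), ℂ) := ⟨hper.lift, by
      apply continuous_coinduced_dom.2
      change Continuous fun θ : ℝ => exp (θ * I) ^ N * exp (F θ * I)
      fun_prop⟩ with hφ
    have hφe : ∀ θ : ℝ, φ θ = exp (θ * I) ^ N * exp (F θ * I) := fun θ => rfl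
    have hcoeff : ∀ m < 0, fourierCoeff φ m = 0 := by
      intro m hm
      rw [← hvan m hm, fourierCoeff_eq_intervalIntegral _ _ 0, zero_add, fCoeff, real_smul]
      push_cast
      congr 1
      refine intervalIntegral.integral_congr fun θ _ => ?_
      simp only [hφe, hFe, fourier_two_pi_apply, smul_eq_mul]
      rw [← exp_int_mul, ← exp_nat_mul, ← exp_add, ← exp_add, ← exp_add]
      congr 1
      push_cast
      ring
    obtain ⟨G, hGd, hGe⟩ := exists_diffContOnCl_extension φ hcoeff
    have hG : IsDiscInner G := ⟨hGd, fun z hz => by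
      obtain ⟨θ, rfl⟩ := exists_exp_of_norm_one hz
      rw [hGe, hφe, norm_mul, norm_pow, norm_exp_ofReal_mul_I, norm_exp_ofReal_mul_I]
      simp⟩
    obtain ⟨m, σ, z, hσ, hz, hB⟩ := hG.exists_blaschke
    have hm : m = N + 1 := by
      refine degree_eq (σ := σ) hFc (by simpa using hFp 0) hz fun θ => ?_
      rw [← hφe, ← hGe, hB _ (norm_exp_ofReal_mul_I θ)]
    subst hm
    refine ⟨N, σ, z, hσ, hz, fun ζ hζ => ?_⟩
    rw [← hB ζ hζ]
    obtain ⟨θ, rfl⟩ := exists_exp_of_norm_one hζ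
    rw [hGe, hφe, hFe, mul_div_cancel_left₀ _ (pow_ne_zero _ (exp_ne_zero _))]
  · rintro ⟨n, σ, z, -, hz, hB⟩
    refine ⟨-n, fun j hj => ?_⟩
    by_contra hlt
    exact hj (fCoeff_blaschke_eq_zero hz hB (not_le.1 hlt))
end

section
/- Let B₁(z) = σ₁ ∏_{k=1}^{n} (z − z_k)/(1 − conj(z_k) z) and B₂(z) = σ₂ ∏_{k=1}^{m} (z − w_k)/(1 − conj(w_k) z) be finite Blaschke products with z₁,…,z_n, w₁,…,w_m ∈ 𝔻 and σ₁, σ₂ ∈ 𝕋, and let f = B₁/B₂ restricted to 𝕋. Then f is a sense-preserving circle homeomorphism if and only if n − m = 1 and ∑_{k=1}^{n} P(z_k, ζ) ≥ ∑_{k=1}^{m} P(w_k, ζ) for all ζ ∈ 𝕋. If, in addition, this inequality is strict for all ζ ∈ 𝕋, then f is a circle diffeomorphism. -/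
/-!
On the unit circle, each Blaschke factor with zero `a` has an explicit real-analytic lift
(`factorLift`) which increases by `2π` over a period and whose derivative is the Poisson kernel at
`a` (`hasDerivAt_factorLift`). Adding the lifts of the numerator, subtracting those of the
denominator and adding a constant for the unimodular factors gives a lift `F` of the quotient with
`F (θ + 2π) = F θ + 2π (n - m)` and `F' = ∑ P(z_k, ·) - ∑ P(w_k, ·)`.

If the quotient has a strictly increasing lift of degree one, then `F` differs from it by a
constant (`lift_unique`), so `n - m = 1` and `F' ≥ 0`. Conversely `F' ≥ 0` makes `F` monotone, and
it is strictly monotone because an analytic function constant on an interval is constant, whereas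
`F` has degree one. If `F' > 0`, then `F` itself is the lift of a diffeomorphism.
-/

open Complex MeasureTheory intervalIntegral ComplexConjugate

/-- A sense-preserving diffeomorphism of the unit circle, described via a `C¹`
degree-one lift with everywhere positive derivative. -/
def CirclePosDiffeo (f : ℂ → ℂ) : Prop :=
  ∃ F : ℝ → ℝ, ContDiff ℝ 1 F ∧ (∀ θ, 0 < deriv F θ) ∧
    (∀ θ, F (θ + 2 * Real.pi) = F θ + 2 * Real.pi) ∧
    ∀ θ : ℝ, f (Complex.exp (θ * Complex.I)) = Complex.exp (F θ * Complex.I)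

/-- The Poisson kernel of the unit disk. -/
noncomputable def poissonK (z ζ : ℂ) : ℝ := (1 - ‖z‖ ^ 2) / ‖ζ - z‖ ^ 2

/-- A continuous lift of the disk automorphism `ζ ↦ (ζ - a) / (1 - conj a * ζ)`, restricted to the
unit circle, for `‖a‖ < 1`. With `u = 1 - conj a * ζ` the automorphism is `ζ * conj u / u`, and
`u` has positive real part, so the principal argument of `u` is smooth along the circle. -/
noncomputable def factorLift (a : ℂ) (θ : ℝ) : ℝ :=
  θ - 2 * (Complex.log (1 - conj a * Complex.exp (θ * Complex.I))).im

lemma norm_conj_mul_exp (a : ℂ) (θ : ℝ) : ‖conj a * Complex.exp (θ * Complex.I)‖ = ‖a‖ := by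
  rw [norm_mul, Complex.norm_exp_ofReal_mul_I, mul_one, RCLike.norm_conj]

lemma one_sub_mem_slitPlane {v : ℂ} (hv : ‖v‖ < 1) : 1 - v ∈ Complex.slitPlane := by
  left
  have := (Complex.re_le_norm v).trans_lt hv
  simp only [Complex.sub_re, Complex.one_re]
  linarith

lemma factorLift_add_two_pi (a : ℂ) (θ : ℝ) :
    factorLift a (θ + 2 * Real.pi) = factorLift a θ + 2 * Real.pi := by
  have h : Complex.exp (((θ + 2 * Real.pi : ℝ) : ℂ) * Complex.I)
      = Complex.exp (θ * Complex.I) := by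
    rw [← Complex.exp_periodic (θ * Complex.I)]
    congr 1
    push_cast
    ring
  unfold factorLift
  rw [h]
  ring

lemma exp_factorLift {a : ℂ} (ha : ‖a‖ < 1) (θ : ℝ) :
    (Complex.exp (θ * Complex.I) - a) / (1 - conj a * Complex.exp (θ * Complex.I))
      = Complex.exp (factorLift a θ * Complex.I) := by
  unfold factorLift
  set ζ := Complex.exp (θ * Complex.I) with hζ
  set u := 1 - conj a * ζ with hu
  have hu0 : u ≠ 0 := Complex.slitPlane_ne_zero
    (one_sub_mem_slitPlane (by rw [norm_conj_mul_exp]; exact ha))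
  have hζn : ζ * conj ζ = 1 := by
    rw [Complex.mul_conj, Complex.normSq_eq_norm_sq, hζ, Complex.norm_exp_ofReal_mul_I]
    simp
  have hnum : ζ - a = ζ * conj u := by
    simp only [hu, map_sub, map_one, map_mul, Complex.conj_conj]
    linear_combination a * hζn
  -- `conj u / u = exp (conj (log u) - log u) = exp (-2 i Im (log u))`
  have h1 : conj u / u = Complex.exp (conj (Complex.log u) - Complex.log u) := by
    rw [Complex.exp_sub, Complex.exp_conj, Complex.exp_log hu0]
  have h2 : conj (Complex.log u) - Complex.log u
      = -(2 * (Complex.log u).im * Complex.I) := by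
    rw [← neg_sub, Complex.sub_conj]
    push_cast
    ring
  rw [hnum, mul_div_assoc, h1, h2, hζ, ← Complex.exp_add]
  congr 1
  push_cast
  ring

/-- The derivative of the lift is the real part of `(1 + v) / (1 - v)` with
`v = conj a * exp (iθ)`, which is the Poisson kernel. -/
lemma hasDerivAt_factorLift {a : ℂ} (ha : ‖a‖ < 1) (θ : ℝ) :
    HasDerivAt (factorLift a) (poissonK a (Complex.exp (θ * Complex.I))) θ := by
  have hv := norm_conj_mul_exp a θ
  have hs : 1 - conj a * Complex.exp (θ * Complex.I) ∈ Complex.slitPlane :=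
    one_sub_mem_slitPlane (by rw [hv]; exact ha)
  have hE : HasDerivAt (fun t : ℝ => Complex.exp (t * Complex.I))
      (Complex.exp (θ * Complex.I) * (1 * Complex.I)) θ :=
    ((Complex.ofRealCLM.hasDerivAt (x := θ)).mul_const Complex.I).cexp
  have hU := (hE.const_mul (conj a)).const_sub 1
  have hL := hU.clog_real hs
  have hI := Complex.imCLM.hasFDerivAt.comp_hasDerivAt θ hL
  have hF := (hasDerivAt_id θ).sub (hI.const_mul 2)
  refine hF.congr_deriv ?_
  set ζ := Complex.exp (θ * Complex.I) with hζ
  have hζ1 : ‖ζ‖ = 1 := Complex.norm_exp_ofReal_mul_I θ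
  have hden : ‖ζ - a‖ = ‖1 - conj a * ζ‖ := by
    have hζn : ζ * conj ζ = 1 := by
      rw [Complex.mul_conj, Complex.normSq_eq_norm_sq, hζ1]; simp
    have : ζ - a = ζ * conj (1 - conj a * ζ) := by
      simp only [map_sub, map_one, map_mul, Complex.conj_conj]
      linear_combination a * hζn
    rw [this, norm_mul, hζ1, RCLike.norm_conj, one_mul]
  unfold poissonK
  rw [hden, ← hv]
  have e : conj a * (ζ * (1 * Complex.I)) = (conj a * ζ) * Complex.I := by ring
  rw [e]
  set v := conj a * ζ with hvdef
  have hn0 : Complex.normSq (1 - v) ≠ 0 := by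
    rw [Ne, Complex.normSq_eq_zero]
    exact Complex.slitPlane_ne_zero hs
  rw [← Complex.normSq_eq_norm_sq, ← Complex.normSq_eq_norm_sq, Complex.imCLM_apply,
    Complex.div_im]
  field_simp
  simp only [Complex.normSq_apply, Complex.neg_im, Complex.neg_re, Complex.mul_im, Complex.mul_re,
    Complex.I_re, Complex.I_im, Complex.sub_re, Complex.sub_im, Complex.one_re, Complex.one_im]
  ring

lemma analyticAt_factorLift {a : ℂ} (ha : ‖a‖ < 1) (θ : ℝ) : AnalyticAt ℝ (factorLift a) θ := by
  have hs : 1 - conj a * Complex.exp (θ * Complex.I) ∈ Complex.slitPlane :=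
    one_sub_mem_slitPlane (by rw [norm_conj_mul_exp]; exact ha)
  have hE : AnalyticAt ℝ (fun t : ℝ => Complex.exp (t * Complex.I)) θ :=
    (analyticAt_cexp.restrictScalars (𝕜 := ℝ)).comp_of_eq
      ((Complex.ofRealCLM.analyticAt θ).mul analyticAt_const) rfl
  have hU : AnalyticAt ℝ (fun t : ℝ => 1 - conj a * Complex.exp (t * Complex.I)) θ :=
    analyticAt_const.sub (analyticAt_const.mul hE)
  have hL := ((analyticAt_clog hs).restrictScalars (𝕜 := ℝ)).comp_of_eq hU rfl
  have hI := (Complex.imCLM.analyticAt _).comp_of_eq hL rfl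
  exact analyticAt_id.sub (analyticAt_const.mul hI)

/-- Two continuous lifts of the same map to the unit circle differ by a constant. -/
lemma lift_unique {F G : ℝ → ℝ} (hF : Continuous F) (hG : Continuous G)
    (h : ∀ θ : ℝ, Complex.exp (F θ * Complex.I) = Complex.exp (G θ * Complex.I)) :
    ∃ c, ∀ θ, F θ = G θ + c := by
  have hk : ∀ θ, ∃ k : ℤ, F θ = G θ + k * (2 * Real.pi) := by
    intro θ
    obtain ⟨k, hk⟩ := Complex.exp_eq_exp_iff_exists_int.mp (h θ)
    refine ⟨k, ?_⟩
    have h2 : ((F θ : ℂ)) * Complex.I = ((G θ + k * (2 * Real.pi) : ℝ) : ℂ) * Complex.I := by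
      rw [hk]; push_cast; ring
    exact_mod_cast mul_right_cancel₀ Complex.I_ne_zero h2
  choose k hk using hk
  have hkc : Continuous k := by
    rw [Int.isClosedEmbedding_coe_real.isEmbedding.continuous_iff]
    have : ((↑) : ℤ → ℝ) ∘ k = fun θ => (F θ - G θ) / (2 * Real.pi) := by
      funext θ
      have := Real.pi_pos
      rw [hk θ]
      simp only [Function.comp]
      field_simp
      ring
    rw [this]
    exact (hF.sub hG).div_const _
  refine ⟨k 0 * (2 * Real.pi), fun θ => ?_⟩
  rw [hk θ, PreconnectedSpace.constant inferInstance hkc (x := θ) (y := 0)]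

/-- the quotient `f = B₁/B₂` of two finite Blaschke products is a circle
homeomorphism iff `n − m = 1` and the Poisson kernel sums satisfy
`∑ P(z_k, ζ) ≥ ∑ P(w_k, ζ)` on `𝕋`; if moreover the inequality is strict everywhere,
then `f` is a circle diffeomorphism. -/
theorem blaschke_quotient_circle_homeo_iff
    (n m : ℕ) (z : Fin n → ℂ) (w : Fin m → ℂ)
    (hz : ∀ k, ‖z k‖ < 1) (hw : ∀ k, ‖w k‖ < 1)
    (σ₁ σ₂ : ℂ) (hσ₁ : ‖σ₁‖ = 1) (hσ₂ : ‖σ₂‖ = 1)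
    (f : ℂ → ℂ)
    (hf : ∀ ζ : ℂ, f ζ = (σ₁ * ∏ k, (ζ - z k) / (1 - conj (z k) * ζ)) /
                         (σ₂ * ∏ k, (ζ - w k) / (1 - conj (w k) * ζ))) :
    (CirclePosHomeo f ↔
      ((n : ℤ) - (m : ℤ) = 1 ∧
        ∀ ζ : ℂ, ‖ζ‖ = 1 → ∑ k, poissonK (w k) ζ ≤ ∑ k, poissonK (z k) ζ)) ∧
    (((n : ℤ) - (m : ℤ) = 1 ∧
        ∀ ζ : ℂ, ‖ζ‖ = 1 → ∑ k, poissonK (w k) ζ < ∑ k, poissonK (z k) ζ) →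
      CirclePosDiffeo f) := by
  have arg_exp : ∀ σ : ℂ, ‖σ‖ = 1 → σ = Complex.exp (σ.arg * Complex.I) := by
    intro σ hσ
    have := Complex.norm_mul_exp_arg_mul_I σ
    rw [hσ] at this
    simpa using this.symm
  obtain ⟨F, hFdef⟩ : ∃ F : ℝ → ℝ, F = fun θ =>
      (σ₁.arg - σ₂.arg) + (∑ k, factorLift (z k) θ - ∑ k, factorLift (w k) θ) := ⟨_, rfl⟩
  have hlift : ∀ θ : ℝ, f (Complex.exp (θ * Complex.I)) = Complex.exp (F θ * Complex.I) := by
    intro θ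
    rw [hf, Finset.prod_congr rfl (fun k _ => exp_factorLift (hz k) θ),
      Finset.prod_congr rfl (fun k _ => exp_factorLift (hw k) θ),
      ← Complex.exp_sum, ← Complex.exp_sum]
    nth_rewrite 1 [arg_exp σ₁ hσ₁, arg_exp σ₂ hσ₂]
    rw [← Complex.exp_add, ← Complex.exp_add, ← Complex.exp_sub, hFdef]
    congr 1
    push_cast
    rw [← Finset.sum_mul, ← Finset.sum_mul]
    ring
  have hderiv : ∀ θ : ℝ, HasDerivAt F (∑ k, poissonK (z k) (Complex.exp (θ * Complex.I))
      - ∑ k, poissonK (w k) (Complex.exp (θ * Complex.I))) θ := by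
    intro θ
    rw [hFdef]
    exact ((HasDerivAt.fun_sum fun k _ => hasDerivAt_factorLift (hz k) θ).sub
      (HasDerivAt.fun_sum fun k _ => hasDerivAt_factorLift (hw k) θ)).const_add _
  have hanal : AnalyticOnNhd ℝ F Set.univ := by
    intro θ _
    rw [hFdef]
    exact analyticAt_const.add
      ((Finset.analyticAt_fun_sum _ fun k _ => analyticAt_factorLift (hz k) θ).sub
      (Finset.analyticAt_fun_sum _ fun k _ => analyticAt_factorLift (hw k) θ))
  have hcont : Continuous F := continuous_iff_continuousAt.mpr fun θ => (hderiv θ).continuousAt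
  have hdeg : ∀ θ, F (θ + 2 * Real.pi) = F θ + ((n : ℝ) - m) * (2 * Real.pi) := by
    intro θ
    simp only [hFdef, factorLift_add_two_pi, Finset.sum_add_distrib, Finset.sum_const,
      Finset.card_univ, Fintype.card_fin, nsmul_eq_mul]
    ring
  have hper : (n : ℤ) - (m : ℤ) = 1 → ∀ θ, F (θ + 2 * Real.pi) = F θ + 2 * Real.pi := by
    intro h θ
    have : (n : ℝ) - m = 1 := by exact_mod_cast h
    rw [hdeg, this, one_mul]
  refine ⟨⟨?_, ?_⟩, ?_⟩
  · rintro ⟨G, hGc, hGm, hGp, hG⟩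
    obtain ⟨c, hc⟩ := lift_unique hcont hGc (fun θ => by rw [← hlift, hG])
    have hmono : Monotone F := by
      intro a b hab
      rw [hc, hc]
      linarith [hGm.monotone hab]
    constructor
    · have h1 := hdeg 0
      rw [hc, hc, hGp] at h1
      have h2 : ((n : ℝ) - m) = 1 := by
        have := Real.two_pi_pos
        have h3 : ((n : ℝ) - m) * (2 * Real.pi) = 1 * (2 * Real.pi) := by linarith
        exact mul_right_cancel₀ this.ne' h3
      exact_mod_cast h2
    · intro ζ hζ
      have h1 := hmono.deriv_nonneg (x := ζ.arg)
      rw [(hderiv _).deriv, ← arg_exp ζ hζ] at h1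
      linarith
  · rintro ⟨hnm, hP⟩
    have hmono : Monotone F := monotone_of_deriv_nonneg (fun θ => (hderiv θ).differentiableAt)
      fun θ => by
        rw [(hderiv θ).deriv]
        exact sub_nonneg.mpr (hP _ (Complex.norm_exp_ofReal_mul_I θ))
    refine ⟨F, hcont, hmono.strictMono_of_injective ?_, hper hnm, hlift⟩
    -- A monotone `F` taking a value twice is constant on an interval, hence constant by
    -- analyticity, which is incompatible with `F (θ + 2π) = F θ + 2π`.
    have key : ∀ a b, a < b → F a ≠ F b := by
      intro a b hab hFab
      have hev : F =ᶠ[nhds ((a + b) / 2)] fun _ => F a := by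
        filter_upwards [Ioo_mem_nhds (show a < (a + b) / 2 by linarith)
          (show (a + b) / 2 < b by linarith)] with x hx
        exact le_antisymm (hFab ▸ hmono hx.2.le) (hmono hx.1.le)
      have hconst := hanal.eq_of_eventuallyEq analyticOnNhd_const hev
      have h1 := hper hnm 0
      rw [hconst] at h1
      linarith [Real.two_pi_pos]
    intro a b hab
    by_contra hne
    rcases lt_or_gt_of_ne hne with h | h
    · exact key a b h hab
    · exact key b a h hab.symm
  · rintro ⟨hnm, hP⟩
    refine ⟨F, ?_, fun θ => ?_, hper hnm, hlift⟩
    · exact contDiff_iff_contDiffAt.mpr fun θ => (hanal θ trivial).contDiffAt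
    · rw [(hderiv θ).deriv]
      exact sub_pos.mpr (hP _ (Complex.norm_exp_ofReal_mul_I θ))
end

section
/- For every 2π-periodic continuously differentiable function u : ℝ → ℝ and every ε > 0, there exist an integer n ≥ 0, a finite Blaschke product B of degree n, and a 2π-periodic continuously differentiable function v : ℝ → ℝ with e^{iv(θ)} = B(e^{iθ}) e^{−inθ} for all θ (i.e., v is a continuous branch of arg(B(ζ)/ζⁿ) on 𝕋), such that sup_θ |u(θ) − v(θ)| + sup_θ |u′(θ) − v′(θ)| < ε. -/
open Complex MeasureTheory ComplexConjugate

/-!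
On the circle a Blaschke factor satisfies `(ζ - z) / (1 - z̄ ζ) * ζ⁻¹ = conj w / w` with
`w = 1 - z̄ ζ`, a point of the right half-plane. So `blaschkeArg z θ = -2 Im log (1 - z̄ e^{iθ})` is a
smooth periodic branch of its argument, and its derivative is `kernel z (e^{iθ})`, where
`kernel z ζ = 2 Re (z̄ ζ / (1 - z̄ ζ))`. A periodic function vanishing at `0` is controlled by its
derivative, so it is enough to approximate `u'` uniformly by finite sums of kernels with
`z` in the disk and then fix the unimodular constant `σ` so that `v 0 = u 0`.

By density of trigonometric polynomials in the continuous functions on the circle, and since the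
class of functions that are approximable up to an additive constant is closed under sums, it
suffices to treat `Re (a ζ ^ k)` with `k ≥ 1` (`exists_kernel_approx_monomial`). The device here is
to use the polynomial `(1 - b ζ ^ k) ^ m` with `b = a / (2 m k)`, which mimics `exp (-a ζ ^ k / (2 k))`:
it has no zero in the closed disk, and the kernels attached to the reflections `1 / conj ρ` of its
zeros `ρ` add up, by the logarithmic derivative, to `Re (a ζ ^ k / (1 - b ζ ^ k))`, which tends
uniformly to `Re (a ζ ^ k)` as `m → ∞`.

The additive constant that remains when approximating `u'` is small by Rolle's theorem, because `u'`
and the kernels are both derivatives of periodic functions.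
-/

/-- The derivative in `θ` of the argument of `(ζ - z) / (1 - z̄ ζ) * ζ⁻¹` at `ζ = e^{iθ}`; it equals
the Poisson kernel of `z` minus `1`. -/
noncomputable def kernel (z ζ : ℂ) : ℝ := 2 * (conj z * ζ / (1 - conj z * ζ)).re

/-- A continuous branch of the argument of `(ζ - z) / (1 - z̄ ζ) * ζ⁻¹` at `ζ = e^{iθ}`, for
`‖z‖ < 1`; the principal logarithm is evaluated in the right half-plane only. -/
noncomputable def blaschkeArg (z : ℂ) (θ : ℝ) : ℝ :=
  -2 * (log (1 - conj z * exp (θ * I))).im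

lemma norm_conj_mul_lt {z ζ : ℂ} (hz : ‖z‖ < 1) (hζ : ‖ζ‖ = 1) : ‖conj z * ζ‖ < 1 := by
  simpa [hζ] using hz

lemma one_sub_mem_slitPlane_s10 {x : ℂ} (hx : ‖x‖ < 1) : 1 - x ∈ slitPlane := by
  left
  have := (re_le_norm x).trans_lt hx
  simp only [sub_re, one_re]
  linarith

lemma hasDerivAt_blaschkeArg {z : ℂ} (hz : ‖z‖ < 1) (θ : ℝ) :
    HasDerivAt (blaschkeArg z) (kernel z (exp (θ * I))) θ := by
  have hs := one_sub_mem_slitPlane_s10 (norm_conj_mul_lt hz (norm_exp_ofReal_mul_I θ))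
  have h1 : HasDerivAt (fun t : ℝ => exp (t * I)) (exp (θ * I) * I) θ := by
    simpa using ((hasDerivAt_id θ).ofReal_comp.mul_const I).cexp
  have h2 := (((h1.const_mul (conj z)).const_sub 1).clog_real hs)
  have h3 := ((imCLM.hasFDerivAt.comp_hasDerivAt θ h2).const_mul (-2))
  refine h3.congr_deriv ?_
  have : -(conj z * (exp (θ * I) * I)) / (1 - conj z * exp (θ * I))
      = -(I * (conj z * exp (θ * I) / (1 - conj z * exp (θ * I)))) := by ring
  simp only [imCLM_apply, kernel, this, neg_im, I_mul_im]
  ring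

lemma contDiff_blaschkeArg {z : ℂ} (hz : ‖z‖ < 1) : ContDiff ℝ 1 (blaschkeArg z) := by
  have h1 : ContDiff ℝ 1 (fun t : ℝ => 1 - conj z * exp (t * I)) := by
    have : ContDiff ℝ 1 (fun t : ℝ => (t : ℂ)) := ofRealCLM.contDiff
    fun_prop
  have h2 : ContDiff ℝ 1 (fun t : ℝ => log (1 - conj z * exp (t * I))) :=
    contDiff_iff_contDiffAt.2 fun t => ContDiffAt.comp (g := log) t
      ((contDiffAt_log (one_sub_mem_slitPlane_s10
        (norm_conj_mul_lt hz (norm_exp_ofReal_mul_I t)))).restrict_scalars ℝ) h1.contDiffAt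
  exact contDiff_const.mul (imCLM.contDiff.comp h2)

lemma periodic_blaschkeArg (z : ℂ) : Function.Periodic (blaschkeArg z) (2 * Real.pi) := by
  intro θ
  have : exp ((θ + 2 * Real.pi : ℝ) * I) = exp (θ * I) := by
    push_cast
    rw [add_mul, exp_add, exp_two_pi_mul_I, mul_one]
  simp only [blaschkeArg, this]

lemma exp_blaschkeArg {z : ℂ} (hz : ‖z‖ < 1) (θ : ℝ) :
    exp (blaschkeArg z θ * I) =
      (exp (θ * I) - z) / (1 - conj z * exp (θ * I)) * exp (-θ * I) := by
  have hs := one_sub_mem_slitPlane_s10 (norm_conj_mul_lt hz (norm_exp_ofReal_mul_I θ))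
  set w := 1 - conj z * exp (θ * I) with hw
  have hw0 : w ≠ 0 := slitPlane_ne_zero hs
  have hc : conj w = (exp (θ * I) - z) * exp (-θ * I) := by
    have h1 : exp (θ * I) * exp (-θ * I) = 1 := by rw [← exp_add]; simp
    rw [sub_mul, h1, hw]
    simp [← exp_conj]
  have h2 : (blaschkeArg z θ : ℂ) * I = conj (log w) - log w := by
    apply Complex.ext <;> simp [blaschkeArg, ← hw]
    ring
  rw [h2, exp_sub, exp_conj, exp_log hw0, hc]
  ring

/-- The points `z` are the reflections in the circle of the roots of `1 - b X ^ k`, so the left side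
is `-ζ P' / P` for that polynomial `P`. -/
lemma exists_sum_eq (b : ℂ) (hb : ‖b‖ < 1) (k : ℕ) :
    ∃ s : Multiset ℂ, (∀ z ∈ s, ‖z‖ < 1) ∧ ∀ ζ : ℂ, ‖ζ‖ = 1 →
      (s.map fun z => conj z * ζ / (1 - conj z * ζ)).sum = k * b * ζ ^ k / (1 - b * ζ ^ k) := by
  classical
  set P : Polynomial ℂ := 1 - Polynomial.C b * Polynomial.X ^ k with hP
  have heval (x : ℂ) : P.eval x = 1 - b * x ^ k := by simp [hP]
  have hne (x : ℂ) (hx : ‖x‖ ≤ 1) : P.eval x ≠ 0 := by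
    rw [heval, sub_ne_zero]
    intro h
    have h1 : ‖b * x ^ k‖ < 1 := by
      rw [norm_mul, norm_pow]
      exact (mul_le_of_le_one_right (norm_nonneg _) (pow_le_one₀ (norm_nonneg _) hx)).trans_lt hb
    rw [← h] at h1
    simp at h1
  have hroot (ρ : ℂ) (hρ : ρ ∈ P.roots) : 1 < ‖ρ‖ := by
    by_contra! h
    exact hne ρ h (Polynomial.isRoot_of_mem_roots hρ)
  refine ⟨P.roots.map fun ρ => conj ρ⁻¹, ?_, ?_⟩
  · intro z hz
    obtain ⟨ρ, hρ, rfl⟩ := Multiset.mem_map.1 hz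
    simpa using inv_lt_one_of_one_lt₀ (hroot ρ hρ)
  · intro ζ hζ
    have h1 := (IsAlgClosed.splits P).eval_derivative_div_eval_of_ne_zero (hne ζ hζ.le)
    have h2 : (P.roots.map fun ρ => ρ⁻¹ * ζ / (1 - ρ⁻¹ * ζ)).sum
        = -ζ * (P.roots.map fun ρ => 1 / (ζ - ρ)).sum := by
      rw [← Multiset.sum_map_mul_left]
      congr 1
      refine Multiset.map_congr rfl fun ρ hρ => ?_
      have hr := hroot ρ hρ
      have hρ0 : ρ ≠ 0 := by rintro rfl; simp at hr; linarith
      have hd : ζ - ρ ≠ 0 := by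
        rw [sub_ne_zero]; rintro rfl; linarith
      have hd' : ρ - ζ ≠ 0 := by
        rw [← neg_sub]; exact neg_ne_zero.2 hd
      have : 1 - ρ⁻¹ * ζ = (ρ - ζ) / ρ := by field_simp
      rw [this]
      field_simp
      ring
    rw [Multiset.map_map]
    simp only [Function.comp_def, conj_conj]
    rw [h2, ← h1, heval]
    rcases k with _ | k
    · simp [hP]
    · simp [hP]
      ring

/-- Each of the zeros supplied by `exists_sum_eq` for `b = a / (2 m k)` is repeated `m` times. -/
lemma exists_kernel_approx_monomial (a : ℂ) (k : ℕ) (hk : k ≠ 0) (η : ℝ) (hη : 0 < η) :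
    ∃ s : Multiset ℂ, (∀ z ∈ s, ‖z‖ < 1) ∧ ∀ ζ : ℂ, ‖ζ‖ = 1 →
      |(a * ζ ^ k).re - (s.map fun z => kernel z ζ).sum| < η := by
  obtain ⟨m, hm⟩ := exists_nat_gt (‖a‖ + ‖a‖ ^ 2 / η)
  have hm0 : (0 : ℝ) < m := lt_of_le_of_lt (by positivity) hm
  have hm1 : ‖a‖ < m := lt_of_le_of_lt (le_add_of_nonneg_right (by positivity)) hm
  have hm2 : ‖a‖ ^ 2 < η * m := by
    have : ‖a‖ ^ 2 / η < m := lt_of_le_of_lt (le_add_of_nonneg_left (by positivity)) hm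
    rwa [div_lt_iff₀ hη, mul_comm] at this
  have hk1 : (1 : ℝ) ≤ k := by exact_mod_cast Nat.one_le_iff_ne_zero.2 hk
  have hmC : (m : ℂ) ≠ 0 := by exact_mod_cast hm0.ne'
  have hkC : (k : ℂ) ≠ 0 := by exact_mod_cast hk
  set b : ℂ := a / (2 * m * k) with hb
  have hbn : ‖b‖ ≤ ‖a‖ / (2 * m) := by
    rw [hb]
    simp only [norm_div, norm_mul, norm_natCast, norm_ofNat]
    exact div_le_div_of_nonneg_left (norm_nonneg _) (by positivity)
      (le_mul_of_one_le_right (by positivity) hk1)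
  have hb2 : ‖b‖ < 1 / 2 := by
    refine hbn.trans_lt ?_
    rw [div_lt_iff₀ (by positivity)]
    linarith
  have hab : ‖a‖ * ‖b‖ < η / 2 := by
    calc ‖a‖ * ‖b‖ ≤ ‖a‖ * (‖a‖ / (2 * m)) := by gcongr
      _ = ‖a‖ ^ 2 / (2 * m) := by ring
      _ < η / 2 := by
        rw [div_lt_iff₀ (by positivity)]
        linarith
  obtain ⟨s, hs, hsum⟩ := exists_sum_eq b (by linarith) k
  refine ⟨m • s, fun z hz => hs z (Multiset.mem_of_mem_nsmul hz), fun ζ hζ => ?_⟩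
  set x := b * ζ ^ k with hx
  have hxn : ‖x‖ = ‖b‖ := by simp [hx, hζ]
  have h1x : 1 / 2 ≤ ‖1 - x‖ := by
    have := norm_sub_norm_le 1 x
    rw [norm_one] at this
    linarith
  have h1x0 : 1 - x ≠ 0 := norm_pos_iff.1 (by linarith)
  have hre (t : Multiset ℂ) : (t.map fun z => kernel z ζ).sum
      = 2 * (t.map fun z => conj z * ζ / (1 - conj z * ζ)).sum.re := by
    induction t using Multiset.induction_on with
    | empty => simp
    | cons z t ih =>
      rw [Multiset.map_cons, Multiset.map_cons, Multiset.sum_cons, Multiset.sum_cons, ih, add_re,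
        mul_add, kernel]
  have hval : ((m • s).map fun z => kernel z ζ).sum = (a * ζ ^ k / (1 - x)).re := by
    rw [Multiset.map_nsmul, Multiset.sum_nsmul, hre, hsum ζ hζ]
    have : a * ζ ^ k / (1 - x) = ((m * 2 : ℝ) : ℂ) * (k * b * ζ ^ k / (1 - x)) := by
      rw [hb]
      push_cast
      field_simp
    rw [this, re_ofReal_mul, nsmul_eq_mul]
    ring
  rw [hval, ← sub_re]
  refine (abs_re_le_norm _).trans_lt ?_
  have : a * ζ ^ k - a * ζ ^ k / (1 - x) = -(a * ζ ^ k * x / (1 - x)) := by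
    field_simp
    ring
  rw [this, norm_neg, norm_div, div_lt_iff₀ (by linarith)]
  simp only [norm_mul, norm_pow, hζ, hxn, one_pow, mul_one]
  nlinarith

/-- The real part of `f` is, up to an additive constant, a uniform limit on the circle of finite sums
of kernels. -/
def KernelApprox (f : ℝ → ℂ) : Prop :=
  ∀ η : ℝ, 0 < η → ∃ (c : ℝ) (s : Multiset ℂ), (∀ z ∈ s, ‖z‖ < 1) ∧
    ∀ θ : ℝ, |(f θ).re - c - (s.map fun z => kernel z (exp (θ * I))).sum| < η

lemma KernelApprox.add {f g : ℝ → ℂ} (hf : KernelApprox f) (hg : KernelApprox g) :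
    KernelApprox fun θ => f θ + g θ := by
  intro η hη
  obtain ⟨c, s, hs, h⟩ := hf (η / 2) (half_pos hη)
  obtain ⟨d, t, ht, h'⟩ := hg (η / 2) (half_pos hη)
  refine ⟨c + d, s + t, fun z hz => (Multiset.mem_add.1 hz).elim (hs z) (ht z), fun θ => ?_⟩
  have h1 := abs_lt.1 (h θ)
  have h2 := abs_lt.1 (h' θ)
  rw [Multiset.map_add, Multiset.sum_add, add_re, abs_lt]
  constructor <;> linarith [h1.1, h1.2, h2.1, h2.2]

/-- A negative frequency reduces to a positive one by conjugation, which leaves the real part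
unchanged. -/
lemma kernelApprox_monomial (a : ℂ) (n : ℤ) :
    KernelApprox fun θ => a * exp (n * θ * I) := by
  intro η hη
  have key (θ : ℝ) (k : ℕ) : exp (k * θ * I) = exp (θ * I) ^ k := by
    rw [← exp_nat_mul, mul_assoc]
  rcases lt_trichotomy n 0 with hn | rfl | hn
  · obtain ⟨k, rfl⟩ := Int.exists_eq_neg_ofNat hn.le
    obtain ⟨s, hs, h⟩ := exists_kernel_approx_monomial (conj a) k (by grind) η hη
    refine ⟨0, s, hs, fun θ => ?_⟩
    have h1 := h _ (norm_exp_ofReal_mul_I θ)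
    have : (a * exp (((-(k : ℤ) : ℤ) : ℂ) * θ * I)).re = (conj a * exp (θ * I) ^ k).re := by
      rw [← conj_re, map_mul, ← exp_conj, ← key]
      simp
    rw [this, sub_zero]
    exact h1
  · exact ⟨a.re, 0, by simp, fun θ => by simpa using hη⟩
  · obtain ⟨k, rfl⟩ := Int.eq_ofNat_of_zero_le hn.le
    obtain ⟨s, hs, h⟩ := exists_kernel_approx_monomial a k (by grind) η hη
    refine ⟨0, s, hs, fun θ => ?_⟩
    have h1 := h _ (norm_exp_ofReal_mul_I θ)
    simpa [key] using h1

lemma kernelApprox_of_continuous (g : ℝ → ℝ) (hg : Continuous g)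
    (hper : Function.Periodic g (2 * Real.pi)) : KernelApprox fun θ => g θ := by
  have : Fact (0 < 2 * Real.pi) := ⟨Real.two_pi_pos⟩
  have hcont : Continuous (hper.lift : AddCircle (2 * Real.pi) → ℝ) :=
    continuous_coinduced_dom.2 hg
  let G : C(AddCircle (2 * Real.pi), ℂ) :=
    ⟨fun x => (hper.lift x : ℂ), continuous_ofReal.comp hcont⟩
  have hspan : ∀ f ∈ Submodule.span ℂ (Set.range (@fourier (2 * Real.pi))),
      ∀ a : ℂ, KernelApprox fun θ => a * f (θ : AddCircle (2 * Real.pi)) := by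
    intro f hf
    induction hf using Submodule.span_induction with
    | mem f hf =>
      obtain ⟨n, rfl⟩ := hf
      intro a
      convert kernelApprox_monomial a n using 4 with θ
      rw [fourier_coe_apply]
      congr 1
      have : (Real.pi : ℂ) ≠ 0 := by exact_mod_cast Real.pi_ne_zero
      push_cast
      field_simp
    | zero => exact fun a η hη => ⟨0, 0, by simp, fun θ => by simpa using hη⟩
    | add f g _ _ hf hg =>
      intro a
      simpa [mul_add] using (hf a).add (hg a)
    | smul b f _ hf =>
      intro a
      simpa [mul_assoc] using hf (a * b)
  have hG : G ∈ closure
      (Submodule.span ℂ (Set.range (@fourier (2 * Real.pi))) : Set C(AddCircle (2 * Real.pi), ℂ)) := by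
    rw [← Submodule.topologicalClosure_coe, span_fourier_closure_eq_top]
    trivial
  intro η hη
  obtain ⟨f, hf, hd⟩ := Metric.mem_closure_iff.1 hG (η / 2) (half_pos hη)
  obtain ⟨c, s, hs, h⟩ := hspan f hf 1 (η / 2) (half_pos hη)
  refine ⟨c, s, hs, fun θ => ?_⟩
  have h1 := abs_lt.1 (h θ)
  have h2 : |(G (θ : AddCircle (2 * Real.pi)) - f (θ : AddCircle (2 * Real.pi))).re| < η / 2 := by
    refine (abs_re_le_norm _).trans_lt ?_
    rw [← dist_eq_norm]
    exact (ContinuousMap.dist_apply_le_dist _).trans_lt hd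
  have h3 : G (θ : AddCircle (2 * Real.pi)) = (g θ : ℂ) := rfl
  rw [h3, sub_re, abs_lt] at h2
  simp only [one_mul] at h1
  rw [abs_lt]
  constructor <;> linarith [h1.1, h1.2, h2.1, h2.2]

/-- every `2π`-periodic `C¹` function `u : ℝ → ℝ` can be approximated
in the `C¹` norm by continuous branches of `arg(B(ζ)/ζⁿ)` where `B` is a finite
Blaschke product of degree `n`. -/
theorem helson_sarason_C1
    (u : ℝ → ℝ) (hu_per : Function.Periodic u (2 * Real.pi)) (hu : ContDiff ℝ 1 u)
    (ε : ℝ) (hε : 0 < ε) :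
    ∃ (n : ℕ) (σ : ℂ) (z : Fin n → ℂ), ‖σ‖ = 1 ∧ (∀ k, ‖z k‖ < 1) ∧
      ∃ v : ℝ → ℝ, Function.Periodic v (2 * Real.pi) ∧ ContDiff ℝ 1 v ∧
        (∀ θ : ℝ, Complex.exp (v θ * Complex.I) =
          (σ * ∏ k, (Complex.exp (θ * Complex.I) - z k) /
              (1 - conj (z k) * Complex.exp (θ * Complex.I))) *
            Complex.exp (-(n : ℂ) * θ * Complex.I)) ∧
        ∃ a b : ℝ, a + b < ε ∧
          (∀ θ : ℝ, |u θ - v θ| ≤ a) ∧ (∀ θ : ℝ, |deriv u θ - deriv v θ| ≤ b) := by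
  have hud (θ : ℝ) : HasDerivAt u (deriv u θ) θ :=
    (hu.differentiable one_ne_zero θ).hasDerivAt
  have hper' : Function.Periodic (deriv u) (2 * Real.pi) := by
    intro θ
    rw [← deriv_comp_add_const, hu_per.funext]
  -- `2 η (2 π + 1) < ε`
  set η := ε / 20 with hη
  have hη0 : 0 < η := by positivity
  obtain ⟨c, s, hs, h⟩ :=
    kernelApprox_of_continuous _ (hu.continuous_deriv le_rfl) hper' η hη0
  obtain ⟨L, rfl⟩ := Quot.exists_rep s
  set z : Fin L.length → ℂ := fun k => L[k.1] with hzdef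
  have hz (k : Fin L.length) : ‖z k‖ < 1 := hs _ (List.getElem_mem k.2)
  replace h (θ : ℝ) : |deriv u θ - c - ∑ k, kernel (z k) (exp (θ * I))| < η := by
    have h1 := h θ
    rw [hzdef, Fin.sum_univ_fun_getElem L fun w => kernel w (exp (θ * I))]
    simpa using h1
  set d : ℝ := u 0 - ∑ k, blaschkeArg (z k) 0 with hd
  set v : ℝ → ℝ := fun θ => d + ∑ k, blaschkeArg (z k) θ with hv
  have hvd (θ : ℝ) : HasDerivAt v (∑ k, kernel (z k) (exp (θ * I))) θ :=
    (HasDerivAt.fun_sum fun k _ => hasDerivAt_blaschkeArg (hz k) θ).const_add d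
  have hvper : Function.Periodic v (2 * Real.pi) := by
    intro θ
    simp only [hv, periodic_blaschkeArg _ θ]
  have hv0 : u 0 - v 0 = 0 := by simp [hv, hd]
  have hwd (θ : ℝ) := (hud θ).sub (hvd θ)
  have hwper : Function.Periodic (u - v) (2 * Real.pi) := hu_per.sub hvper
  -- the derivative of the periodic function `u - v` vanishes somewhere
  have hc : |c| < η := by
    obtain ⟨t, -, ht⟩ := exists_hasDerivAt_eq_zero Real.two_pi_pos
      (fun x _ => (hwd x).continuousAt.continuousWithinAt)
      (by simpa using (hwper 0).symm) (fun x _ => hwd x)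
    have h1 := h t
    have h2 : deriv u t - c - ∑ k, kernel (z k) (exp (t * I)) = -c := by linarith
    rwa [h2, abs_neg] at h1
  have hder (θ : ℝ) : |deriv u θ - ∑ k, kernel (z k) (exp (θ * I))| ≤ 2 * η := by
    have h1 := abs_lt.1 (h θ)
    have h2 := abs_lt.1 hc
    rw [abs_le]
    constructor <;> linarith [h1.1, h1.2, h2.1, h2.2]
  refine ⟨L.length, exp (d * I), z, norm_exp_ofReal_mul_I d, hz, v, hvper, ?_, ?_,
    2 * η * (2 * Real.pi), 2 * η, ?_, ?_, ?_⟩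
  · exact contDiff_const.add (ContDiff.sum fun k _ => contDiff_blaschkeArg (hz k))
  · intro θ
    have h1 : (v θ : ℂ) * I = d * I + ∑ k, (blaschkeArg (z k) θ : ℂ) * I := by
      simp [hv, add_mul, Finset.sum_mul]
    rw [h1, exp_add, exp_sum, Finset.prod_congr rfl fun k _ => exp_blaschkeArg (hz k) θ,
      Finset.prod_mul_distrib, Finset.prod_const, Finset.card_univ, Fintype.card_fin, ← exp_nat_mul,
      mul_assoc]
    congr 3
    ring
  · have := Real.pi_lt_d2
    nlinarith
  · intro θ
    obtain ⟨y, hy, hyθ⟩ := hwper.exists_mem_Ico₀ Real.two_pi_pos θ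
    have h1 := (convex_univ (𝕜 := ℝ) (E := ℝ)).norm_image_sub_le_of_norm_hasDerivWithin_le
      (fun x _ => (hwd x).hasDerivWithinAt) (fun x _ => hder x) (Set.mem_univ 0) (Set.mem_univ y)
    simp only [Pi.sub_apply, Real.norm_eq_abs] at h1 hyθ
    rw [hv0, sub_zero, sub_zero, abs_of_nonneg hy.1] at h1
    rw [hyθ]
    exact h1.trans (by gcongr; exact hy.2.le)
  · intro θ
    rw [(hvd θ).deriv]
    exact hder θ
end

section
/- Let f : 𝕋 → ℂ be a continuous injective map whose image is horizontally convex, in the equivalent sense that there exist θ₁ < θ₂ < θ₁ + 2π such that the function θ ↦ Im f(e^{iθ}) is monotone on [θ₁, θ₂] and monotone on [θ₂, θ₁ + 2π]. Suppose moreover that Im f is Lipschitz continuous on 𝕋 with Lipschitz constant L > 0 (with respect to arclength, i.e., |Im f(e^{iθ}) − Im f(e^{iφ})| ≤ L|θ − φ|), and let δ = max_{𝕋} Im f − min_{𝕋} Im f. Then |f̂(−1)| + |f̂(1)| ≥ (δ/(2π)) (1 − cos(δ/(4L))). -/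
/-!
Write `g θ = Im f(e^{iθ})`. Since `sin (θ - α)` is a combination of `e^{iθ}` and `e^{-iθ}` with
coefficients of modulus `1/2`, one has `|∫ g(θ) sin (θ - α) dθ| ≤ π (|f̂(-1)| + |f̂(1)|)` for every
`α` (`abs_integral_im_le`), so it suffices to find one `α` for which the left side is at least
`(δ/2) (1 - cos (δ/(4L)))`.

Say `g` increases on `[a, b]` and decreases on `[b, a + 2π]`. The intermediate value theorem
gives `α` with `g α = g (α + π) = c`, where `α ∈ [a, b]` and `α + π ∈ [b, a + 2π]`. Unimodality
then forces `g ≥ c` on `[α, α + π]` and `g ≤ c` on `[α + π, α + 2π]`, so `(g(θ) - c) sin (θ - α)`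
is nonnegative throughout. On one of these half circles `|g - c|` reaches `δ/2`; by the Lipschitz
bound it is at least `δ/4` within distance `δ/(4L)` of that point, and integrating the sine over
this window gives the estimate (`half_circle_bound`).
-/

open Complex MeasureTheory intervalIntegral

/-- A function is monotone on a set if it is monotone nondecreasing or nonincreasing. -/
def MonotoneOnEither (g : ℝ → ℝ) (s : Set ℝ) : Prop :=
  MonotoneOn g s ∨ AntitoneOn g s

/-- Contribution of a single half circle: a nonnegative `L`-Lipschitz bump on `[0, π]` of height at least
`δ/2` vanishing at the endpoints has a quantitatively positive first sine coefficient. -/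
lemma half_circle_bound (G : ℝ → ℝ) (L δ β : ℝ) (hL : 0 < L) (hδ : 0 ≤ δ) (hc : Continuous G)
    (hlip : ∀ x y, |G x - G y| ≤ L * |x - y|)
    (hpos : ∀ x ∈ Set.Icc 0 Real.pi, 0 ≤ G x) (h0 : G 0 = 0) (hπ : G Real.pi = 0)
    (hβ : β ∈ Set.Icc 0 Real.pi) (hGβ : δ / 2 ≤ G β) :
    δ / 2 * (1 - Real.cos (δ / (4 * L))) ≤ ∫ x in (0:ℝ)..Real.pi, G x * Real.sin x := by
  obtain ⟨hβ0, hβπ⟩ := hβ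
  set r := δ / (4 * L) with hr
  have hr0 : 0 ≤ r := by positivity
  have hrL : L * r = δ / 4 := by rw [hr]; field_simp
  -- The bump cannot climb to height `δ/2` within distance `2r` of a zero.
  have h1 : 2 * r ≤ β := by
    have h := (abs_le.1 (hlip β 0)).2
    rw [h0, sub_zero, sub_zero, abs_of_nonneg hβ0] at h
    refine le_of_mul_le_mul_left ?_ hL
    linarith
  have h2 : β ≤ Real.pi - 2 * r := by
    have h := (abs_le.1 (hlip β Real.pi)).2
    rw [hπ, sub_zero, abs_of_nonpos (by linarith : β - Real.pi ≤ 0)] at h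
    have : 2 * r ≤ Real.pi - β := by
      refine le_of_mul_le_mul_left ?_ hL
      linarith
    linarith
  have hint : ∀ u v : ℝ, IntervalIntegrable (fun x => G x * Real.sin x) volume u v := fun u v =>
    (hc.mul Real.continuous_sin).intervalIntegrable u v
  have hsub : ∫ x in (β - r)..(β + r), G x * Real.sin x ≤ ∫ x in (0:ℝ)..Real.pi, G x * Real.sin x := by
    refine integral_mono_interval (by linarith) (by linarith) (by linarith) ?_ (hint _ _)
    refine (ae_restrict_iff' measurableSet_Ioc).2 (Filter.Eventually.of_forall fun x hx => ?_)
    exact mul_nonneg (hpos x ⟨hx.1.le, hx.2⟩) (Real.sin_nonneg_of_nonneg_of_le_pi hx.1.le hx.2)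
  have hlow : ∫ x in (β - r)..(β + r), δ / 4 * Real.sin x ≤
      ∫ x in (β - r)..(β + r), G x * Real.sin x := by
    refine integral_mono_on (by linarith)
      ((continuous_const.mul Real.continuous_sin).intervalIntegrable _ _) (hint _ _) ?_
    intro x hx
    refine mul_le_mul_of_nonneg_right ?_
      (Real.sin_nonneg_of_nonneg_of_le_pi (by linarith [hx.1]) (by linarith [hx.2]))
    have h := (abs_le.1 (hlip β x)).2
    have hx' : |β - x| ≤ r := abs_le.2 ⟨by linarith [hx.2], by linarith [hx.1]⟩
    have := mul_le_mul_of_nonneg_left hx' hL.le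
    linarith
  refine le_trans ?_ (hlow.trans hsub)
  rw [intervalIntegral.integral_const_mul, integral_sin, Real.cos_sub, Real.cos_add]
  have hsr : 0 ≤ Real.sin r := Real.sin_nonneg_of_nonneg_of_le_pi hr0 (by linarith)
  have hcr : 0 ≤ Real.cos r := Real.cos_nonneg_of_mem_Icc ⟨by linarith, by linarith⟩
  have hsβ : Real.sin r ≤ Real.sin β := by
    rcases le_total β (Real.pi / 2) with h | h
    · exact Real.sin_le_sin_of_le_of_le_pi_div_two (by linarith) h (by linarith)
    · rw [← Real.sin_pi_sub β]
      exact Real.sin_le_sin_of_le_of_le_pi_div_two (by linarith) (by linarith) (by linarith)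
  have key : 1 - Real.cos r ≤ Real.sin β * Real.sin r := by
    nlinarith [Real.sin_sq_add_cos_sq r, Real.cos_le_one r, mul_le_mul_of_nonneg_right hsβ hsr]
  nlinarith [mul_le_mul_of_nonneg_left key hδ]

/-- The bound for a Lipschitz profile that changes sign at two antipodal points. -/
lemma antipodal_bound (G : ℝ → ℝ) (L c β γ : ℝ) (hL : 0 < L)
    (hlip : ∀ x y, |G x - G y| ≤ L * |x - y|) (hc : Continuous G)
    (hper : ∀ x, G (x + 2 * Real.pi) = G x)
    (h0 : G 0 = c) (hπ : G Real.pi = c)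
    (hup : ∀ x ∈ Set.Icc 0 Real.pi, c ≤ G x)
    (hdown : ∀ x ∈ Set.Icc Real.pi (2 * Real.pi), G x ≤ c)
    (hβ : β ∈ Set.Icc 0 Real.pi) (hγ : γ ∈ Set.Icc Real.pi (2 * Real.pi)) :
    (G β - G γ) / 2 * (1 - Real.cos ((G β - G γ) / (4 * L))) ≤
      ∫ x in (0:ℝ)..(2 * Real.pi), G x * Real.sin x := by
  have hpi := Real.pi_pos
  have hβ' := hup β hβ
  have hγ' := hdown γ hγ
  have hc1 : Continuous fun x => G x - c := hc.sub continuous_const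
  have hc2 : Continuous fun x => c - G (x + Real.pi) :=
    continuous_const.sub (hc.comp (continuous_id.add continuous_const))
  have hp1 : ∀ x ∈ Set.Icc 0 Real.pi, 0 ≤ G x - c := fun x hx => sub_nonneg.2 (hup x hx)
  have hp2 : ∀ x ∈ Set.Icc 0 Real.pi, 0 ≤ c - G (x + Real.pi) := fun x hx =>
    sub_nonneg.2 (hdown _ ⟨by linarith [hx.1], by linarith [hx.2]⟩)
  have hint : ∀ u v : ℝ, IntervalIntegrable (fun x => G x * Real.sin x) volume u v := fun u v =>
    (hc.mul Real.continuous_sin).intervalIntegrable u v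
  have hint' : ∀ u v : ℝ, IntervalIntegrable (fun x => c * Real.sin x) volume u v := fun u v =>
    (continuous_const.mul Real.continuous_sin).intervalIntegrable u v
  have hG2 : G (Real.pi + Real.pi) = c := by rw [← two_mul, ← h0, ← hper 0, zero_add]
  have e1 : ∫ x in (0:ℝ)..Real.pi, (G x - c) * Real.sin x =
      (∫ x in (0:ℝ)..Real.pi, G x * Real.sin x) - 2 * c := by
    simp_rw [sub_mul]
    rw [intervalIntegral.integral_sub (hint _ _) (hint' _ _),
      intervalIntegral.integral_const_mul, integral_sin, Real.cos_pi, Real.cos_zero]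
    ring
  have e2 : ∫ x in (0:ℝ)..Real.pi, (c - G (x + Real.pi)) * Real.sin x =
      (∫ x in Real.pi..(2 * Real.pi), G x * Real.sin x) + 2 * c := by
    have h : ∀ x, (c - G (x + Real.pi)) * Real.sin x =
        (fun y => G y * Real.sin y - c * Real.sin y) (x + Real.pi) := by
      intro x
      simp only [Real.sin_add_pi]
      ring
    simp_rw [h]
    rw [intervalIntegral.integral_comp_add_right
      (fun y => G y * Real.sin y - c * Real.sin y) Real.pi,
      intervalIntegral.integral_sub (hint _ _) (hint' _ _),
      intervalIntegral.integral_const_mul, integral_sin, zero_add, ← two_mul, Real.cos_pi,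
      Real.cos_two_pi]
    ring
  have e3 : ∫ x in (0:ℝ)..(2 * Real.pi), G x * Real.sin x =
      (∫ x in (0:ℝ)..Real.pi, (G x - c) * Real.sin x) +
      ∫ x in (0:ℝ)..Real.pi, (c - G (x + Real.pi)) * Real.sin x := by
    rw [e1, e2, ← intervalIntegral.integral_add_adjacent_intervals (hint 0 Real.pi) (hint _ _)]
    ring
  have n1 : 0 ≤ ∫ x in (0:ℝ)..Real.pi, (G x - c) * Real.sin x :=
    intervalIntegral.integral_nonneg hpi.le fun x hx =>
      mul_nonneg (hp1 x hx) (Real.sin_nonneg_of_nonneg_of_le_pi hx.1 hx.2)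
  have n2 : 0 ≤ ∫ x in (0:ℝ)..Real.pi, (c - G (x + Real.pi)) * Real.sin x :=
    intervalIntegral.integral_nonneg hpi.le fun x hx =>
      mul_nonneg (hp2 x hx) (Real.sin_nonneg_of_nonneg_of_le_pi hx.1 hx.2)
  rw [e3]
  -- The level `c` is at distance at least half the oscillation from the maximum or the minimum.
  rcases le_total ((G β - G γ) / 2) (G β - c) with h | h
  · have := half_circle_bound (fun x => G x - c) L (G β - G γ) β hL (by linarith) hc1
      (fun x y => by simpa using hlip x y) hp1 (by simp [h0]) (by simp [hπ]) hβ h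
    linarith
  · have := half_circle_bound (fun x => c - G (x + Real.pi)) L (G β - G γ) (γ - Real.pi) hL
      (by linarith) hc2
      (fun x y => by
        have := hlip (y + Real.pi) (x + Real.pi)
        rw [add_sub_add_right_eq_sub, abs_sub_comm y x] at this
        simpa using this) hp2 (by simp [hπ]) (by simp [hG2])
      ⟨by linarith [hγ.1], by linarith [hγ.2]⟩ (by simp only [sub_add_cancel]; linarith)
    linarith

/-- A unimodal profile, rising on `[a, b]` and falling on `[b, a + 2π]`, correlates with a suitably
shifted sine. The shift `α` is chosen with `g α = g (α + π)`. -/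
lemma unimodal_bound (g : ℝ → ℝ) (L a b : ℝ) (hL : 0 < L)
    (hlip : ∀ x y, |g x - g y| ≤ L * |x - y|) (hc : Continuous g)
    (hper : ∀ x, g (x + 2 * Real.pi) = g x) (hab : a < b) (hba : b < a + 2 * Real.pi)
    (hm : MonotoneOn g (Set.Icc a b)) (ha : AntitoneOn g (Set.Icc b (a + 2 * Real.pi))) :
    ∃ α, (g b - g a) / 2 * (1 - Real.cos ((g b - g a) / (4 * L))) ≤
      ∫ x in (0:ℝ)..(2 * Real.pi), g x * Real.sin (x - α) := by
  have hpi := Real.pi_pos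
  have hga : g (a + 2 * Real.pi) = g a := hper a
  have lo1 : ∀ x ∈ Set.Icc a b, g a ≤ g x := fun x hx => hm ⟨le_rfl, hab.le⟩ hx hx.1
  have hi1 : ∀ x ∈ Set.Icc a b, g x ≤ g b := fun x hx => hm hx ⟨hab.le, le_rfl⟩ hx.2
  have lo2 : ∀ x ∈ Set.Icc b (a + 2 * Real.pi), g a ≤ g x := fun x hx =>
    hga ▸ ha hx ⟨hba.le, le_rfl⟩ hx.2
  have hi2 : ∀ x ∈ Set.Icc b (a + 2 * Real.pi), g x ≤ g b := fun x hx =>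
    ha ⟨le_rfl, hba.le⟩ hx hx.1
  have hlo : ∀ x ∈ Set.Icc a (a + 2 * Real.pi), g a ≤ g x := fun x hx =>
    (le_total x b).elim (fun h => lo1 x ⟨hx.1, h⟩) fun h => lo2 x ⟨h, hx.2⟩
  have hhi : ∀ x ∈ Set.Icc a (a + 2 * Real.pi), g x ≤ g b := fun x hx =>
    (le_total x b).elim (fun h => hi1 x ⟨hx.1, h⟩) fun h => hi2 x ⟨h, hx.2⟩
  -- The search range is the set of `α ∈ [a, b]` with `α + π ∈ [b, a + 2π]`; at its lower end
  -- `α` is the minimum or `α + π` the maximum, at its upper end the reverse.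
  obtain ⟨α, ⟨hα1, hα2⟩, hα⟩ : ∃ α ∈ Set.Icc (max a (b - Real.pi)) (min b (a + Real.pi)),
      g α - g (α + Real.pi) = 0 := by
    have hle : max a (b - Real.pi) ≤ min b (a + Real.pi) :=
      max_le (le_min hab.le (by linarith)) (le_min (by linarith) (by linarith))
    have hcc : Continuous fun x => g x - g (x + Real.pi) :=
      hc.sub (hc.comp (continuous_id.add continuous_const))
    refine intermediate_value_Icc hle hcc.continuousOn ⟨?_, ?_⟩
    · rcases max_choice a (b - Real.pi) with h | h
      · have := hlo (a + Real.pi) ⟨by linarith, by linarith⟩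
        simp only [h]; linarith
      · have := hhi (b - Real.pi) ⟨by linarith [max_eq_right_iff.1 h], by linarith⟩
        simp only [h, sub_add_cancel]; linarith
    · rcases min_choice b (a + Real.pi) with h | h
      · have := hhi (b + Real.pi) ⟨by linarith, by linarith [min_eq_left_iff.1 h]⟩
        simp only [h]; linarith
      · have := hlo (a + Real.pi) ⟨by linarith, by linarith⟩
        have e : a + Real.pi + Real.pi = a + 2 * Real.pi := by ring
        simp only [h, e, hga]; linarith
  have a1 := (max_le_iff.1 hα1).1
  have a2 := (max_le_iff.1 hα1).2
  have a3 := (le_min_iff.1 hα2).1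
  have a4 := (le_min_iff.1 hα2).2
  have hα' : g (α + Real.pi) = g α := by linarith
  refine ⟨α, ?_⟩
  have hb := antipodal_bound (fun x => g (x + α)) L (g α) (b - α) (a + 2 * Real.pi - α) hL
    (fun x y => by simpa using hlip (x + α) (y + α))
    (hc.comp (continuous_id.add continuous_const))
    (fun x => by rw [add_right_comm]; exact hper _) (by simp) (by simp only [add_comm Real.pi, hα'])
    (fun x hx => by
      rcases le_total (x + α) b with h | h
      · exact hm ⟨a1, a3⟩ ⟨by linarith [hx.1], h⟩ (by linarith [hx.1])
      · rw [← hα']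
        exact ha ⟨h, by linarith [hx.2]⟩ ⟨by linarith, by linarith⟩ (by linarith [hx.2]))
    (fun x hx => by
      rcases le_total (x + α) (a + 2 * Real.pi) with h | h
      · rw [← hα']
        exact ha ⟨by linarith, by linarith⟩ ⟨by linarith [hx.1], h⟩ (by linarith [hx.1])
      · have e := hper (x + α - 2 * Real.pi)
        rw [sub_add_cancel] at e
        simp only [e]
        exact hm ⟨by linarith, by linarith [hx.2]⟩ ⟨a1, a3⟩ (by linarith [hx.2]))
    ⟨by linarith, by linarith⟩ ⟨by linarith, by linarith⟩
  simp only [sub_add_cancel, hga] at hb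
  refine hb.trans (le_of_eq ?_)
  have hP : Function.Periodic (fun x => g x * Real.sin (x - α)) (2 * Real.pi) := fun x => by
    simp only [hper]
    rw [add_sub_right_comm, Real.sin_add_two_pi]
  have s1 := intervalIntegral.integral_comp_add_right (a := 0) (b := 2 * Real.pi)
    (fun x => g x * Real.sin (x - α)) α
  simp only [add_sub_cancel_right] at s1
  rw [s1, zero_add, add_comm (2 * Real.pi) α, hP.intervalIntegral_add_eq α 0, zero_add]

/-- Correlations of `Im f` with shifted sines are controlled by the coefficients of order `±1`. -/
lemma abs_integral_im_le (f : ℂ → ℂ) (hcont : ContinuousOn f (Metric.sphere (0 : ℂ) 1)) (α : ℝ) :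
    |∫ x in (0:ℝ)..(2 * Real.pi), (f (Complex.exp (x * Complex.I))).im * Real.sin (x - α)| ≤
      Real.pi * (‖fCoeff f (-1)‖ + ‖fCoeff f 1‖) := by
  have hF : Continuous fun x : ℝ => f (Complex.exp (x * Complex.I)) :=
    hcont.comp_continuous (by fun_prop) fun x => by simp [Complex.norm_exp_ofReal_mul_I]
  set F : ℝ → ℂ := fun x : ℝ => f (Complex.exp (x * Complex.I)) with hFdef
  have hpi : (Real.pi : ℂ) ≠ 0 := Complex.ofReal_ne_zero.2 Real.pi_ne_zero
  have i1 : IntervalIntegrable (fun x : ℝ => F x * Complex.exp (-((-1 : ℤ) : ℂ) * x * Complex.I))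
      volume 0 (2 * Real.pi) := Continuous.intervalIntegrable (by fun_prop) _ _
  have i2 : IntervalIntegrable (fun x : ℝ => F x * Complex.exp (-((1 : ℤ) : ℂ) * x * Complex.I))
      volume 0 (2 * Real.pi) := Continuous.intervalIntegrable (by fun_prop) _ _
  have key : ∫ x in (0:ℝ)..(2 * Real.pi), F x * ((Real.sin (x - α) : ℝ) : ℂ) =
      Real.pi * (Complex.I * (Complex.exp (α * Complex.I) * fCoeff f 1 -
        Complex.exp ((-α : ℝ) * Complex.I) * fCoeff f (-1))) := by
    have h : ∀ x : ℝ, F x * ((Real.sin (x - α) : ℝ) : ℂ) =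
        Complex.I / 2 * Complex.exp (α * Complex.I) *
          (F x * Complex.exp (-((1 : ℤ) : ℂ) * x * Complex.I)) -
        Complex.I / 2 * Complex.exp ((-α : ℝ) * Complex.I) *
          (F x * Complex.exp (-((-1 : ℤ) : ℂ) * x * Complex.I)) := by
      intro x
      have e1 : Complex.exp (-((x : ℂ) - α) * Complex.I) =
          Complex.exp (α * Complex.I) * Complex.exp (-((1 : ℤ) : ℂ) * x * Complex.I) := by
        rw [← Complex.exp_add]; congr 1; push_cast; ring
      have e2 : Complex.exp (((x : ℂ) - α) * Complex.I) =
          Complex.exp ((-α : ℝ) * Complex.I) *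
            Complex.exp (-((-1 : ℤ) : ℂ) * x * Complex.I) := by
        rw [← Complex.exp_add]; congr 1; push_cast; ring
      rw [Complex.ofReal_sin, Complex.ofReal_sub, Complex.sin, e1, e2]
      ring
    simp_rw [h]
    rw [intervalIntegral.integral_sub (i2.const_mul _) (i1.const_mul _),
      intervalIntegral.integral_const_mul, intervalIntegral.integral_const_mul]
    unfold fCoeff
    simp only [hFdef]
    field_simp
    ring_nf
  have him : ∫ x in (0:ℝ)..(2 * Real.pi), (F x).im * Real.sin (x - α) =
      (∫ x in (0:ℝ)..(2 * Real.pi), F x * ((Real.sin (x - α) : ℝ) : ℂ)).im := by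
    have hi : IntervalIntegrable (fun x : ℝ => F x * ((Real.sin (x - α) : ℝ) : ℂ)) volume 0
        (2 * Real.pi) := Continuous.intervalIntegrable (by fun_prop) _ _
    have := Complex.imCLM.intervalIntegral_comp_comm hi
    simp only [Complex.imCLM_apply, Complex.im_mul_ofReal] at this
    exact this
  rw [him, key]
  refine (Complex.abs_im_le_norm _).trans ?_
  rw [norm_mul, norm_mul, Complex.norm_I, one_mul, Complex.norm_real, Real.norm_of_nonneg Real.pi_pos.le]
  refine mul_le_mul_of_nonneg_left ((norm_sub_le _ _).trans ?_) Real.pi_pos.le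
  rw [norm_mul, norm_mul, Complex.norm_exp_ofReal_mul_I, Complex.norm_exp_ofReal_mul_I]
  linarith

/-- The oscillation of a unimodal profile is the difference of its values at the two turning
points. -/
lemma oscillation_eq (g : ℝ → ℝ) (a b : ℝ) (hper : ∀ x, g (x + 2 * Real.pi) = g x)
    (hab : a < b) (hba : b < a + 2 * Real.pi)
    (hm : MonotoneOn g (Set.Icc a b)) (ha : AntitoneOn g (Set.Icc b (a + 2 * Real.pi))) :
    (⨆ x, g x) = g b ∧ (⨅ x, g x) = g a := by
  have hP : Function.Periodic g (2 * Real.pi) := hper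
  have hbd : ∀ x, g a ≤ g x ∧ g x ≤ g b := by
    intro x
    obtain ⟨y, hy, e⟩ := hP.exists_mem_Ico Real.two_pi_pos x a
    rw [e]
    rcases le_total y b with h | h
    · exact ⟨hm ⟨le_rfl, hab.le⟩ ⟨hy.1, h⟩ hy.1, hm ⟨hy.1, h⟩ ⟨hab.le, le_rfl⟩ h⟩
    · exact ⟨hper a ▸ ha ⟨h, hy.2.le⟩ ⟨hba.le, le_rfl⟩ hy.2.le,
        ha ⟨le_rfl, hba.le⟩ ⟨h, hy.2.le⟩ h⟩
  exact ⟨le_antisymm (ciSup_le fun x => (hbd x).2)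
      (le_ciSup (f := g) ⟨g b, by rintro _ ⟨x, rfl⟩; exact (hbd x).2⟩ b),
    le_antisymm (ciInf_le (f := g) ⟨g a, by rintro _ ⟨x, rfl⟩; exact (hbd x).1⟩ a)
      (le_ciInf fun x => (hbd x).1)⟩

/-- quantitative nonvanishing, `|f̂(−1)| + |f̂(1)| ≥ (δ/2π)(1 − cos(δ/4L))`,
for a circle embedding with horizontally convex image whose imaginary part is
`L`-Lipschitz in the angle, where `δ` is the oscillation of `Im f` on the circle. -/
theorem horizontally_convex_quantitative
    (f : ℂ → ℂ)
    (hcont : ContinuousOn f (Metric.sphere (0 : ℂ) 1))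
    (hinj : Set.InjOn f (Metric.sphere (0 : ℂ) 1))
    (hconv : ∃ θ₁ θ₂ : ℝ, θ₁ < θ₂ ∧ θ₂ < θ₁ + 2 * Real.pi ∧
      MonotoneOnEither (fun θ => (f (Complex.exp (θ * Complex.I))).im) (Set.Icc θ₁ θ₂) ∧
      MonotoneOnEither (fun θ => (f (Complex.exp (θ * Complex.I))).im)
        (Set.Icc θ₂ (θ₁ + 2 * Real.pi)))
    (L : ℝ) (hL : 0 < L)
    (hlip : ∀ θ φ : ℝ, |(f (Complex.exp (θ * Complex.I))).im -
      (f (Complex.exp (φ * Complex.I))).im| ≤ L * |θ - φ|)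
    (δ : ℝ)
    (hδ : δ = (⨆ θ : ℝ, (f (Complex.exp (θ * Complex.I))).im) -
              (⨅ θ : ℝ, (f (Complex.exp (θ * Complex.I))).im)) :
    δ / (2 * Real.pi) * (1 - Real.cos (δ / (4 * L))) ≤ ‖fCoeff f (-1)‖ + ‖fCoeff f 1‖ := by
  obtain ⟨a, b, hab, hba, h1, h2⟩ := hconv
  have hpi := Real.pi_pos
  have hper : ∀ x : ℝ, (f (Complex.exp ((x + 2 * Real.pi : ℝ) * Complex.I))).im =
      (f (Complex.exp (x * Complex.I))).im := by
    intro x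
    have e : ((x + 2 * Real.pi : ℝ) : ℂ) * Complex.I = x * Complex.I + 2 * Real.pi * Complex.I := by
      push_cast; ring
    rw [e, Complex.exp_periodic]
  have hc : Continuous fun x : ℝ => (f (Complex.exp (x * Complex.I))).im :=
    Complex.continuous_im.comp (hcont.comp_continuous (by fun_prop) fun x => by
      simp [Complex.norm_exp_ofReal_mul_I])
  have hcoef := abs_integral_im_le f hcont
  set g : ℝ → ℝ := fun x : ℝ => (f (Complex.exp (x * Complex.I))).im with hg
  have hper' : ∀ x, g (x + 2 * Real.pi) = g x := hper
  have hlip' : ∀ x y, |g x - g y| ≤ L * |x - y| := hlip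
  suffices ∃ α, δ / 2 * (1 - Real.cos (δ / (4 * L))) ≤
      |∫ x in (0:ℝ)..(2 * Real.pi), g x * Real.sin (x - α)| by
    obtain ⟨α, hα⟩ := this
    have h : Real.pi * (δ / (2 * Real.pi) * (1 - Real.cos (δ / (4 * L)))) ≤
        Real.pi * (‖fCoeff f (-1)‖ + ‖fCoeff f 1‖) := by
      refine le_trans (le_of_eq ?_) (hα.trans (hcoef α))
      field_simp
    exact le_of_mul_le_mul_left h hpi
  -- If `g` has the same monotonicity on both arcs, it is constant, so one arc may be reversed.
  have hcases : (MonotoneOn g (Set.Icc a b) ∧ AntitoneOn g (Set.Icc b (a + 2 * Real.pi))) ∨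
      (AntitoneOn g (Set.Icc a b) ∧ MonotoneOn g (Set.Icc b (a + 2 * Real.pi))) := by
    rcases h1 with h1 | h1 <;> rcases h2 with h2 | h2
    · refine Or.inl ⟨h1, fun x hx y hy _ => ?_⟩
      have u1 := h1 ⟨le_rfl, hab.le⟩ ⟨hab.le, le_rfl⟩ hab.le
      have u2 := h2 ⟨le_rfl, hba.le⟩ hx hx.1
      have u3 := h2 hy ⟨hba.le, le_rfl⟩ hy.2
      have u4 := hper' a
      linarith
    · exact Or.inl ⟨h1, h2⟩
    · exact Or.inr ⟨h1, h2⟩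
    · refine Or.inr ⟨h1, fun x hx y hy _ => ?_⟩
      have u1 := h1 ⟨le_rfl, hab.le⟩ ⟨hab.le, le_rfl⟩ hab.le
      have u2 := h2 ⟨le_rfl, hba.le⟩ hx hx.1
      have u3 := h2 hy ⟨hba.le, le_rfl⟩ hy.2
      have u4 := hper' a
      linarith
  rcases hcases with ⟨hm, ha⟩ | ⟨ha, hm⟩
  · obtain ⟨s1, s2⟩ := oscillation_eq g a b hper' hab hba hm ha
    rw [s1, s2] at hδ
    obtain ⟨α, hα⟩ := unimodal_bound g L a b hL hlip' hc hper' hab hba hm ha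
    exact ⟨α, hδ ▸ hα.trans (le_abs_self _)⟩
  · -- The falling-then-rising case is the previous one based at `b`, with peak `a + 2π`.
    have ha' : AntitoneOn g (Set.Icc (a + 2 * Real.pi) (b + 2 * Real.pi)) := by
      intro x hx y hy hxy
      have := ha (a := x - 2 * Real.pi) (b := y - 2 * Real.pi)
        ⟨by linarith [hx.1], by linarith [hx.2]⟩ ⟨by linarith [hy.1], by linarith [hy.2]⟩
        (by linarith)
      have e1 := hper' (x - 2 * Real.pi)
      have e2 := hper' (y - 2 * Real.pi)
      rw [sub_add_cancel] at e1 e2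
      rwa [e1, e2]
    obtain ⟨s1, s2⟩ := oscillation_eq g b (a + 2 * Real.pi) hper' hba (by linarith) hm ha'
    rw [s1, s2] at hδ
    obtain ⟨α, hα⟩ := unimodal_bound g L b (a + 2 * Real.pi) hL hlip' hc hper' hba (by linarith)
      hm ha'
    exact ⟨α, hδ ▸ hα.trans (le_abs_self _)⟩
end
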